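/- arXiv:1708.00505 — 2 statements merged into one kernel-verified Lean document; each statement's English description precedes it below -/
import Mathlib

section
/- Let b > 0, let q : ℝ → ℂ be continuous on [−b,b], let f solve f'' − q f = 0 on [−b,b] with f(0) = 1, f'(0) = 0, and assume f(x) ≠ 0 on [−b,b]. For ω ∈ ℂ let u(ω,·) be the solution of y'' − q(x)y = −ω² y with y(0) = 1, y'(0) = iω, and define u_N(ω,x) = e^{iωx} + Σ_{n=0}^{N} β_n(x) ∫_{−1}^{1} P_n(y) e^{iωxy} dy. Then there exist functions ε_N : (0,b] → [0,∞) with ε_N(x) → 0 as N → ∞ for every x ∈ (0,b], such that for every C > 0, every nonzero ω ∈ ℂ with |Im ω| ≤ C, every N ∈ ℕ and every x ∈ (0,b], |u(ω,x) − u_N(ω,x)| ≤ ε_N(x)·sinh(Cx)/C. -/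
/-!
On `[0, b]` the operator `h ↦ h + ∫₋ₓˣ K(x, t) h(t) dt`, whose kernel `K` solves a Goursat problem,
turns solutions of `h'' = r` into solutions of `y'' - q y = T r` with the same initial values. By
uniqueness for the Cauchy problem it therefore sends `e^{iωt}` to `u(ω, ·)` and, inductively, `tᵏ`
to the formal power `φₖ`. After rescaling `[-x, x]` to `[-1, 1]`, the second fact says that `βₙ(x)`
is the `n`-th Fourier–Legendre coefficient of `g_x(s) = x K(x, x s)`, and the first that
`u(ω, x) - u_N(ω, x)` is the integral of `e^{iωxs}` against the remainder of the Fourier–Legendre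
series of `g_x`. As `g_x` is `C¹` this series converges uniformly, while
`∫₋₁¹ |e^{iωxs}| ds ≤ 2 sinh(C x) / (C x)` in the strip; so `ε_N(x)` is `2 / x` times the supremum
of the remainder.
-/

open MeasureTheory Set Filter Finset Complex Topology

noncomputable section

/-- The iterated integrals X⁽ⁿ⁾: X⁽⁰⁾ ≡ 1, X⁽ⁿ⁾(x) = n ∫₀ˣ X⁽ⁿ⁻¹⁾(s) (f(s)²)^((−1)ⁿ) ds. -/
def formalX (f : ℝ → ℂ) : ℕ → ℝ → ℂ
  | 0 => fun _ => 1
  | n + 1 => fun x =>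
      (n + 1 : ℂ) * ∫ s in (0:ℝ)..x, formalX f n s * ((f s) ^ 2) ^ ((-1 : ℤ) ^ (n + 1))

/-- The iterated integrals X̃⁽ⁿ⁾: X̃⁽⁰⁾ ≡ 1, X̃⁽ⁿ⁾(x) = n ∫₀ˣ X̃⁽ⁿ⁻¹⁾(s) (f(s)²)^((−1)^(n−1)) ds. -/
def formalXt (f : ℝ → ℂ) : ℕ → ℝ → ℂ
  | 0 => fun _ => 1
  | n + 1 => fun x =>
      (n + 1 : ℂ) * ∫ s in (0:ℝ)..x, formalXt f n s * ((f s) ^ 2) ^ ((-1 : ℤ) ^ n)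

/-- The formal powers φₖ: φₖ = f·X⁽ᵏ⁾ for odd k, φₖ = f·X̃⁽ᵏ⁾ for even k. -/
def formalPower (f : ℝ → ℂ) (k : ℕ) (x : ℝ) : ℂ :=
  if Odd k then f x * formalX f k x else f x * formalXt f k x

/-- The Legendre polynomial Pₙ via Rodrigues' formula. -/
def legendreP (n : ℕ) : Polynomial ℝ :=
  ((1 : ℝ) / (2 ^ n * n.factorial)) • Polynomial.derivative^[n] ((Polynomial.X ^ 2 - 1) ^ n)

/-- βₙ(x) = ((2n+1)/2)·(Σₖ l_{k,n} φₖ(x)/xᵏ − 1), where l_{k,n} is the coefficient of xᵏ in Pₙ. -/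
def betaCoef (f : ℝ → ℂ) (n : ℕ) (x : ℝ) : ℂ :=
  ((2 * n + 1 : ℂ) / 2) *
    ((∑ k ∈ Finset.range (n + 1), ((legendreP n).coeff k : ℂ) * formalPower f k x / (x : ℂ) ^ k) - 1)

section Legendre

open Polynomial

theorem natCast_mul_legendreP (n : ℕ) :
    ((2 ^ n * n.factorial : ℕ) : ℝ[X]) * legendreP n = derivative^[n] ((X ^ 2 - 1) ^ n) := by
  have h : ((2 : ℝ) ^ n * n.factorial) ≠ 0 := by positivity
  rw [legendreP, ← C_eq_natCast, mul_smul_comm, smul_eq_C_mul, ← mul_assoc, ← C_mul]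
  push_cast
  rw [one_div_mul_cancel h, C_1, one_mul]

theorem natCast_two_pow_mul_factorial_ne_zero (n : ℕ) :
    ((2 ^ n * n.factorial : ℕ) : ℝ[X]) ≠ 0 :=
  Nat.cast_ne_zero.2 (by positivity)

theorem derivative_X_sq_sub_one_pow_succ (n : ℕ) :
    derivative ((X ^ 2 - 1 : ℝ[X]) ^ (n + 1)) =
      ((2 * (n + 1) : ℕ) : ℝ[X]) * ((X ^ 2 - 1) ^ n * X) := by
  simp only [derivative_pow_succ, map_add, map_natCast, map_one, derivative_sub, Nat.cast_one,
    pow_one, derivative_X, mul_one, derivative_one, sub_zero, Nat.cast_mul, Nat.cast_ofNat,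
    Nat.cast_add]
  ring

theorem natCast_mul_legendreP_succ (n : ℕ) :
    ((2 ^ n * n.factorial : ℕ) : ℝ[X]) * legendreP (n + 1) =
      derivative^[n] ((X ^ 2 - 1) ^ n * X) := by
  have h := natCast_mul_legendreP (n + 1)
  rw [Function.iterate_succ_apply, derivative_X_sq_sub_one_pow_succ,
    iterate_derivative_natCast_mul, show 2 ^ (n + 1) * (n + 1).factorial =
      2 * (n + 1) * (2 ^ n * n.factorial) by rw [Nat.factorial_succ]; ring,
    Nat.cast_mul, mul_assoc] at h
  exact mul_left_cancel₀ (Nat.cast_ne_zero.2 (by positivity)) h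

theorem derivative_legendreP_succ (n : ℕ) :
    derivative (legendreP (n + 1)) =
      X * derivative (legendreP n) + (n + 1 : ℝ[X]) * legendreP n := by
  refine mul_left_cancel₀ (natCast_two_pow_mul_factorial_ne_zero n) ?_
  rw [← derivative_natCast_mul, natCast_mul_legendreP_succ,
    ← Function.iterate_succ_apply' derivative, iterate_derivative_mul_X,
    Function.iterate_succ_apply', Nat.succ_sub_one,
    ← natCast_mul_legendreP, derivative_natCast_mul, nsmul_eq_mul, Nat.cast_succ]
  ring

theorem derivative_legendreP_add_two (n : ℕ) :
    derivative (legendreP (n + 2)) =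
      (2 * n + 3 : ℝ[X]) * legendreP (n + 1) + derivative (legendreP n) := by
  have h : derivative ((X ^ 2 - 1 : ℝ[X]) ^ (n + 1) * X) =
      ((2 * n + 3 : ℕ) : ℝ[X]) * (X ^ 2 - 1) ^ (n + 1) +
        ((2 * (n + 1) : ℕ) : ℝ[X]) * (X ^ 2 - 1) ^ n := by
    rw [derivative_mul, derivative_X_sq_sub_one_pow_succ, derivative_X]
    push_cast
    ring
  refine mul_left_cancel₀ (natCast_two_pow_mul_factorial_ne_zero (n + 1)) ?_
  rw [← derivative_natCast_mul, natCast_mul_legendreP_succ,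
    ← Function.iterate_succ_apply' derivative, Function.iterate_succ_apply, h,
    iterate_map_add derivative, iterate_derivative_natCast_mul,
    iterate_derivative_natCast_mul, ← natCast_mul_legendreP, Function.iterate_succ_apply',
    ← natCast_mul_legendreP, derivative_natCast_mul, Nat.factorial_succ]
  push_cast
  ring

theorem derivative_legendreP (n : ℕ) :
    derivative (legendreP n) =
      X * derivative (legendreP (n + 1)) - (n + 1 : ℝ[X]) * legendreP (n + 1) := by
  have h := derivative_legendreP_succ (n + 1)
  push_cast at h
  linear_combination h - derivative_legendreP_add_two n

theorem one_sub_X_sq_mul_derivative_legendreP_succ (n : ℕ) :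
    (1 - X ^ 2) * derivative (legendreP (n + 1)) =
      (n + 1 : ℝ[X]) * (legendreP n - X * legendreP (n + 1)) := by
  linear_combination derivative_legendreP_succ n + X * derivative_legendreP n

@[simp]
theorem legendreP_zero : legendreP 0 = 1 := by
  simp [legendreP]

theorem legendreP_one : legendreP 1 = X := by
  simpa using natCast_mul_legendreP_succ 0

theorem derivative_one_sub_X_sq_mul_derivative_legendreP (n : ℕ) :
    derivative ((1 - X ^ 2) * derivative (legendreP n)) =
      -(n * (n + 1) : ℝ[X]) * legendreP n := by
  rcases n with _ | n
  · simp
  · have h := derivative_natCast_mul (n := n + 1) (f := legendreP n - X * legendreP (n + 1))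
    push_cast at h
    rw [one_sub_X_sq_mul_derivative_legendreP_succ, h, derivative_sub, derivative_mul,
      derivative_X, derivative_legendreP]
    push_cast
    ring

theorem eval_legendreP_succ_of_sq_eq_one (n : ℕ) {t : ℝ} (ht : t ^ 2 = 1) :
    (legendreP (n + 1)).eval t = t * (legendreP n).eval t := by
  have h := congrArg (eval t) (one_sub_X_sq_mul_derivative_legendreP_succ n)
  simp only [eval_mul, eval_sub, eval_add, eval_one, eval_pow, eval_X, eval_natCast, ht, sub_self,
    zero_mul, zero_eq_mul] at h
  rcases h with h | h
  · exact absurd h (by positivity)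
  · linear_combination (-t) * h - (legendreP (n + 1)).eval t * ht

@[simp]
theorem eval_one_legendreP (n : ℕ) : (legendreP n).eval 1 = 1 := by
  induction n with
  | zero => simp
  | succ n ih => rw [eval_legendreP_succ_of_sq_eq_one n (one_pow 2), ih, one_mul]

@[simp]
theorem eval_neg_one_legendreP (n : ℕ) : (legendreP n).eval (-1) = (-1) ^ n := by
  induction n with
  | zero => simp
  | succ n ih => rw [eval_legendreP_succ_of_sq_eq_one n neg_one_sq, ih, pow_succ']

end Legendre

section Legendre

open Polynomial

theorem degree_legendreP (n : ℕ) : (legendreP n).degree = n := by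
  have hmonic : (X ^ 2 - 1 : ℝ[X]).Monic := by
    simpa using monic_X_pow_sub_C (1 : ℝ) two_ne_zero
  have hdeg : (X ^ 2 - 1 : ℝ[X]).natDegree = 2 := by
    simpa using natDegree_X_pow_sub_C (n := 2) (r := (1 : ℝ))
  have hpow : ((X ^ 2 - 1 : ℝ[X]) ^ n).natDegree = n + n := by
    rw [hmonic.natDegree_pow, hdeg, mul_two]
  have hcoeff : ((X ^ 2 - 1 : ℝ[X]) ^ n).coeff (n + n) = 1 := by
    rw [← hpow, (hmonic.pow n).coeff_natDegree]
  refine degree_eq_of_le_of_coeff_ne_zero (natDegree_le_iff_degree_le.1 ?_) ?_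
  · refine (natDegree_smul_le _ _).trans ((natDegree_iterate_derivative _ _).trans ?_)
    rw [hpow, Nat.add_sub_cancel]
  · rw [legendreP, coeff_smul, coeff_iterate_derivative, hcoeff, nsmul_one, smul_eq_mul]
    have := Nat.descFactorial_pos.2 (Nat.le_add_left n n)
    positivity

theorem span_range_legendreP : Submodule.span ℝ (Set.range legendreP) = ⊤ :=
  Sequence.span ⟨legendreP, degree_legendreP⟩ fun i =>
    ((leadingCoeff_ne_zero (p := legendreP i)).2 fun h => by
      simpa [h] using degree_legendreP i).isUnit

/-- The energy `n(n+1) Pₙ² + (1 - t²) Pₙ'²` of the Legendre equation, which increases with `|t|`. -/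
def legendreEnergy (n : ℕ) (t : ℝ) : ℝ :=
  n * (n + 1) * (legendreP n).eval t ^ 2 + (1 - t ^ 2) * (derivative (legendreP n)).eval t ^ 2

theorem hasDerivAt_legendreEnergy (n : ℕ) (t : ℝ) :
    HasDerivAt (legendreEnergy n) (2 * t * (derivative (legendreP n)).eval t ^ 2) t := by
  have hode := congrArg (eval t) (derivative_one_sub_X_sq_mul_derivative_legendreP n)
  have hderiv := ((((legendreP n).hasDerivAt t).pow 2).const_mul (n * (n + 1) : ℝ)).add
    ((((hasDerivAt_id t).pow 2).const_sub 1).mul ((derivative (legendreP n)).hasDerivAt t |>.pow 2))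
  refine hderiv.congr_deriv ?_
  simp only [derivative_mul, derivative_sub, derivative_one, derivative_X_pow_succ, Nat.cast_one,
    map_add, map_one, pow_one, zero_sub, neg_mul, eval_add, eval_neg, eval_mul, eval_one, eval_X,
    eval_sub, eval_pow, eval_natCast, Nat.cast_ofNat, Nat.add_one_sub_one, id_eq, mul_one,
    Pi.pow_apply] at hode ⊢
  linear_combination 2 * (derivative (legendreP n)).eval t * hode

theorem continuous_legendreEnergy (n : ℕ) : Continuous (legendreEnergy n) :=
  continuous_iff_continuousAt.2 fun t => (hasDerivAt_legendreEnergy n t).continuousAt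

theorem monotoneOn_legendreEnergy (n : ℕ) : MonotoneOn (legendreEnergy n) (Set.Ici 0) :=
  monotoneOn_of_hasDerivWithinAt_nonneg (convex_Ici 0) (continuous_legendreEnergy n).continuousOn
    (fun t _ => (hasDerivAt_legendreEnergy n t).hasDerivWithinAt) fun t ht => by
      have : 0 ≤ t := interior_subset ht
      positivity

theorem antitoneOn_legendreEnergy (n : ℕ) : AntitoneOn (legendreEnergy n) (Set.Iic 0) :=
  antitoneOn_of_hasDerivWithinAt_nonpos (convex_Iic 0) (continuous_legendreEnergy n).continuousOn
    (fun t _ => (hasDerivAt_legendreEnergy n t).hasDerivWithinAt) fun t ht => by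
      have : t ≤ 0 := interior_subset (s := Set.Iic 0) ht
      exact mul_nonpos_of_nonpos_of_nonneg (by linarith) (sq_nonneg _)

theorem legendreEnergy_le (n : ℕ) {t : ℝ} (ht : t ∈ Set.Icc (-1) 1) :
    legendreEnergy n t ≤ n * (n + 1) := by
  have hone : legendreEnergy n 1 = n * (n + 1) := by simp [legendreEnergy]
  have hneg : legendreEnergy n (-1) = n * (n + 1) := by
    simp [legendreEnergy, ← pow_mul, mul_comm n 2]
  rcases le_total 0 t with h | h
  · exact (monotoneOn_legendreEnergy n h (by simp) ht.2).trans_eq hone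
  · exact (antitoneOn_legendreEnergy n (by simp) h ht.1).trans_eq hneg

theorem abs_eval_legendreP_le_one (n : ℕ) {t : ℝ} (ht : t ∈ Set.Icc (-1) 1) :
    |(legendreP n).eval t| ≤ 1 := by
  rcases Nat.eq_zero_or_pos n with rfl | hn
  · simp
  have hderiv : 0 ≤ (1 - t ^ 2) * (derivative (legendreP n)).eval t ^ 2 :=
    mul_nonneg (by nlinarith [ht.1, ht.2]) (sq_nonneg _)
  have henergy := legendreEnergy_le n ht
  rw [legendreEnergy] at henergy
  rw [← sq_le_one_iff_abs_le_one]
  have : 0 < (n : ℝ) * (n + 1) := by positivity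
  exact le_of_mul_le_mul_left (by linarith) this

theorem integral_eval_derivative (p : ℝ[X]) (a b : ℝ) :
    ∫ t in a..b, (derivative p).eval t = p.eval b - p.eval a :=
  intervalIntegral.integral_eq_sub_of_hasDerivAt (fun t _ => p.hasDerivAt t)
    ((derivative p).continuous.intervalIntegrable _ _)

theorem integral_legendreP_mul_legendreP_of_ne {m n : ℕ} (h : m ≠ n) :
    ∫ t in (-1 : ℝ)..1, (legendreP m * legendreP n).eval t = 0 := by
  set W : ℝ[X] := (1 - X ^ 2) * derivative (legendreP m) * legendreP n -
    legendreP m * ((1 - X ^ 2) * derivative (legendreP n)) with hW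
  have hderiv : derivative W =
      C (n * (n + 1) - m * (m + 1) : ℝ) * (legendreP m * legendreP n) := by
    rw [hW, derivative_sub, derivative_mul, derivative_mul (f := legendreP m),
      derivative_one_sub_X_sq_mul_derivative_legendreP,
      derivative_one_sub_X_sq_mul_derivative_legendreP]
    simp only [neg_mul, mul_neg, map_sub, map_mul, map_natCast, map_add, map_one]
    ring
  have hint := integral_eval_derivative W (-1) 1
  simp only [hderiv, eval_mul (p := C _), eval_C, intervalIntegral.integral_const_mul] at hint
  have hne : (n * (n + 1) - m * (m + 1) : ℝ) ≠ 0 := by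
    rw [show (n * (n + 1) - m * (m + 1) : ℝ) = (n - m) * (n + m + 1) by ring]
    exact mul_ne_zero (sub_ne_zero.2 (mod_cast h.symm)) (by positivity)
  simpa [hW, hne] using hint

theorem integral_legendreP_mul_derivative_eq_zero (n : ℕ) :
    ∀ m ≤ n, ∫ t in (-1 : ℝ)..1, (legendreP n * derivative (legendreP m)).eval t = 0
  | 0, _ => by simp
  | 1, hn => by
    simpa [legendreP_one] using
      integral_legendreP_mul_legendreP_of_ne (Nat.one_le_iff_ne_zero.1 hn)
  | m + 2, hn => by
    have hprod : legendreP n * derivative (legendreP (m + 2)) =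
        C (2 * m + 3 : ℝ) * (legendreP n * legendreP (m + 1)) +
          legendreP n * derivative (legendreP m) := by
      rw [derivative_legendreP_add_two]
      simp only [map_add, map_mul, C_ofNat, map_natCast]
      ring
    simp only [hprod, eval_add, eval_mul (p := C _), eval_C]
    rw [intervalIntegral.integral_add
        (Continuous.intervalIntegrable (by fun_prop) _ _)
        (Continuous.intervalIntegrable (by fun_prop) _ _),
      intervalIntegral.integral_const_mul,
      integral_legendreP_mul_legendreP_of_ne (by lia),
      integral_legendreP_mul_derivative_eq_zero n m (by lia), mul_zero, add_zero]

theorem integral_legendreP_mul_self (n : ℕ) :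
    ∫ t in (-1 : ℝ)..1, (legendreP n * legendreP n).eval t = 2 / (2 * n + 1) := by
  rcases n with _ | n
  · simp
    norm_num
  have hderiv : derivative (X * (legendreP (n + 1) * legendreP (n + 1))) =
      C (2 * n + 3 : ℝ) * (legendreP (n + 1) * legendreP (n + 1)) +
        C 2 * (legendreP (n + 1) * derivative (legendreP n)) := by
    rw [derivative_legendreP]
    simp only [derivative_mul, derivative_X, one_mul, map_add, map_mul, C_ofNat, map_natCast]
    ring
  have hint := integral_eval_derivative (X * (legendreP (n + 1) * legendreP (n + 1))) (-1) 1
  simp only [hderiv, eval_add, eval_mul (p := C _), eval_C] at hint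
  rw [intervalIntegral.integral_add
      (Continuous.intervalIntegrable (by fun_prop) _ _)
      (Continuous.intervalIntegrable (by fun_prop) _ _),
    intervalIntegral.integral_const_mul, intervalIntegral.integral_const_mul,
    integral_legendreP_mul_derivative_eq_zero _ _ n.le_succ] at hint
  simp only [eval_mul, mul_zero, add_zero, eval_X, eval_one_legendreP, mul_one,
    eval_neg_one_legendreP, ← pow_add, ← two_mul, even_two, Even.mul_right, Even.neg_pow, one_pow,
    sub_neg_eq_add] at hint
  rw [eq_div_iff (by positivity)]
  simp only [eval_mul]
  push_cast
  linarith

theorem integral_legendreP_succ (n : ℕ) (s : ℝ) :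
    (2 * n + 3) * ∫ t in (-1 : ℝ)..s, (legendreP (n + 1)).eval t =
      (legendreP (n + 2)).eval s - (legendreP n).eval s := by
  have hderiv : derivative (legendreP (n + 2) - legendreP n) =
      C (2 * n + 3 : ℝ) * legendreP (n + 1) := by
    rw [derivative_sub, derivative_legendreP_add_two]
    simp [C_ofNat]
  have hint := integral_eval_derivative (legendreP (n + 2) - legendreP n) (-1) s
  simpa [hderiv, pow_add] using hint

end Legendre

section LegendreSeries

variable {E : Type*} [NormedAddCommGroup E] [NormedSpace ℝ E]

/-- The `n`-th Fourier–Legendre coefficient `(2n+1)/2 ∫₋₁¹ Pₙ g` of `g` on `[-1, 1]`. -/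
def legendreCoeff (g : ℝ → E) (n : ℕ) : E :=
  ((2 * n + 1) / 2 : ℝ) • ∫ t in (-1 : ℝ)..1, (legendreP n).eval t • g t

/-- The sum of the first `N` terms (degrees below `N`) of the Fourier–Legendre series of `g`. -/
def legendreSum (g : ℝ → E) (N : ℕ) (s : ℝ) : E :=
  ∑ n ∈ Finset.range N, (legendreP n).eval s • legendreCoeff g n

theorem legendreSum_succ (g : ℝ → E) (N : ℕ) (s : ℝ) :
    legendreSum g (N + 1) s =
      legendreSum g N s + (legendreP N).eval s • legendreCoeff g N :=
  Finset.sum_range_succ _ _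

@[fun_prop]
theorem continuous_legendreSum (g : ℝ → E) (N : ℕ) : Continuous (legendreSum g N) := by
  unfold legendreSum
  fun_prop

theorem intervalIntegrable_legendreP_smul {g : ℝ → E} (hg : ContinuousOn g (Set.Icc (-1) 1))
    (n : ℕ) : IntervalIntegrable (fun t => (legendreP n).eval t • g t) volume (-1) 1 :=
  ((legendreP n).continuousOn.smul hg).intervalIntegrable_of_Icc (by norm_num)

theorem legendreSum_add {g h : ℝ → E} (hg : ContinuousOn g (Set.Icc (-1) 1))
    (hh : ContinuousOn h (Set.Icc (-1) 1)) (N : ℕ) (s : ℝ) :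
    legendreSum (fun t => g t + h t) N s = legendreSum g N s + legendreSum h N s := by
  simp_rw [legendreSum, legendreCoeff, smul_add]
  rw [← Finset.sum_add_distrib]
  refine Finset.sum_congr rfl fun n _ => ?_
  rw [intervalIntegral.integral_add (intervalIntegrable_legendreP_smul hg n)
    (intervalIntegrable_legendreP_smul hh n), smul_add, smul_add]

theorem legendreSum_const_smul (c : ℝ) (g : ℝ → E) (N : ℕ) (s : ℝ) :
    legendreSum (fun t => c • g t) N s = c • legendreSum g N s := by
  simp_rw [legendreSum, legendreCoeff, smul_comm _ c, intervalIntegral.integral_smul,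
    smul_comm _ c, Finset.smul_sum]

theorem legendreSum_continuousLinearMap_comp [CompleteSpace E]
    {F : Type*} [NormedAddCommGroup F] [NormedSpace ℝ F] [CompleteSpace F]
    (L : E →L[ℝ] F) {g : ℝ → E} (hg : ContinuousOn g (Set.Icc (-1) 1)) (N : ℕ) (s : ℝ) :
    legendreSum (fun t => L (g t)) N s = L (legendreSum g N s) := by
  simp_rw [legendreSum, legendreCoeff, map_sum, map_smul,
    ← L.intervalIntegral_comp_comm (intervalIntegrable_legendreP_smul hg _), map_smul]

theorem legendreCoeff_legendreP (m n : ℕ) :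
    legendreCoeff (fun t => (legendreP m).eval t) n = if n = m then 1 else 0 := by
  simp_rw [legendreCoeff, smul_eq_mul, ← Polynomial.eval_mul]
  split_ifs with h
  · rw [h, integral_legendreP_mul_self]
    field_simp
  · rw [integral_legendreP_mul_legendreP_of_ne h, mul_zero]

theorem eventually_legendreSum_eval_eq (p : Polynomial ℝ) :
    ∀ᶠ N in atTop, ∀ s, legendreSum (fun t => p.eval t) N s = p.eval s := by
  have hp : p ∈ Submodule.span ℝ (Set.range legendreP) := by simp [span_range_legendreP]
  induction hp using Submodule.span_induction with
  | mem p hp =>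
    obtain ⟨m, rfl⟩ := hp
    filter_upwards [eventually_gt_atTop m] with N hN s
    simp [legendreSum, legendreCoeff_legendreP, hN]
  | zero => simp [legendreSum, legendreCoeff]
  | add p r _ _ hp hr =>
    filter_upwards [hp, hr] with N hpN hrN s
    simp only [Polynomial.eval_add]
    rw [legendreSum_add p.continuousOn r.continuousOn, hpN, hrN]
  | smul c p _ hp =>
    filter_upwards [hp] with N hpN s
    simp only [Polynomial.eval_smul]
    rw [legendreSum_const_smul, hpN]

theorem integral_legendreP_mul_eq (g : ℝ → ℝ) (n : ℕ) :
    ∫ t in (-1 : ℝ)..1, (legendreP n).eval t * g t = 2 / (2 * n + 1) * legendreCoeff g n := by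
  simp_rw [legendreCoeff, smul_eq_mul]
  field_simp

theorem integral_legendreP_mul_legendreSum_of_le (g : ℝ → ℝ) {m n : ℕ} (h : m ≤ n) :
    ∫ t in (-1 : ℝ)..1, (legendreP n).eval t * legendreSum g m t = 0 := by
  simp_rw [legendreSum, Finset.mul_sum, smul_eq_mul, ← mul_assoc, ← Polynomial.eval_mul]
  rw [intervalIntegral.integral_finsetSum fun i _ =>
    Continuous.intervalIntegrable (by fun_prop) _ _]
  refine Finset.sum_eq_zero fun i hi => ?_
  rw [intervalIntegral.integral_mul_const, integral_legendreP_mul_legendreP_of_ne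
    (((Finset.mem_range.1 hi).trans_le h).ne'), zero_mul]

theorem integral_sub_legendreSum_succ_sq {g : ℝ → ℝ} (hg : ContinuousOn g (Set.Icc (-1) 1))
    (N : ℕ) :
    ∫ t in (-1 : ℝ)..1, (g t - legendreSum g (N + 1) t) ^ 2 =
      (∫ t in (-1 : ℝ)..1, (g t - legendreSum g N t) ^ 2) -
        2 / (2 * N + 1) * legendreCoeff g N ^ 2 := by
  set c := legendreCoeff g N
  have hexpand : ∀ t, (g t - legendreSum g (N + 1) t) ^ 2 =
      (g t - legendreSum g N t) ^ 2 - 2 * c * ((legendreP N).eval t * g t) +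
        2 * c * ((legendreP N).eval t * legendreSum g N t) +
        c ^ 2 * (legendreP N * legendreP N).eval t := fun t => by
    rw [legendreSum_succ, smul_eq_mul, Polynomial.eval_mul]
    ring
  have hint {u : ℝ → ℝ} (hu : ContinuousOn u (Set.Icc (-1) 1)) :
      IntervalIntegrable u volume (-1) 1 :=
    hu.intervalIntegrable_of_Icc (by norm_num)
  simp_rw [hexpand]
  rw [intervalIntegral.integral_add (hint (by fun_prop)) (hint (by fun_prop)),
    intervalIntegral.integral_add (hint (by fun_prop)) (hint (by fun_prop)),
    intervalIntegral.integral_sub (hint (by fun_prop)) (hint (by fun_prop))]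
  simp_rw [intervalIntegral.integral_const_mul]
  rw [integral_legendreP_mul_eq, integral_legendreP_mul_legendreSum_of_le g le_rfl,
    integral_legendreP_mul_self]
  ring

theorem integral_sub_legendreSum_sq_le {g : ℝ → ℝ} (hg : ContinuousOn g (Set.Icc (-1) 1)) :
    ∀ N, ∫ t in (-1 : ℝ)..1, (g t - legendreSum g N t) ^ 2 ≤ ∫ t in (-1 : ℝ)..1, g t ^ 2
  | 0 => by simp [legendreSum]
  | N + 1 => by
    rw [integral_sub_legendreSum_succ_sq hg N]
    have : 0 ≤ 2 / (2 * N + 1) * legendreCoeff g N ^ 2 := by positivity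
    linarith [integral_sub_legendreSum_sq_le hg N]

theorem integral_abs_sub_legendreSum_le {g : ℝ → ℝ} (hg : ContinuousOn g (Set.Icc (-1) 1))
    {M : ℝ} (hM : 0 < M) (hgM : ∀ t ∈ Set.Icc (-1) 1, |g t| ≤ M) (N : ℕ) :
    ∫ t in (-1 : ℝ)..1, |g t - legendreSum g N t| ≤ 2 * M := by
  have hint {u : ℝ → ℝ} (hu : ContinuousOn u (Set.Icc (-1) 1)) :
      IntervalIntegrable u volume (-1) 1 :=
    hu.intervalIntegrable_of_Icc (by norm_num)
  have hsq : ∫ t in (-1 : ℝ)..1, g t ^ 2 ≤ 2 * M ^ 2 := by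
    have := intervalIntegral.integral_mono_on (g := fun _ => M ^ 2) (by norm_num)
      (hint (hg.pow 2)) (hint continuousOn_const) fun t ht => sq_le_sq' (abs_le.1 (hgM t ht)).1
        (abs_le.1 (hgM t ht)).2
    norm_num at this
    linarith
  have hamgm : 2 * M * ∫ t in (-1 : ℝ)..1, |g t - legendreSum g N t| ≤
      (∫ t in (-1 : ℝ)..1, (g t - legendreSum g N t) ^ 2) + 2 * M ^ 2 := by
    rw [← intervalIntegral.integral_const_mul, show 2 * M ^ 2 = ∫ _ in (-1 : ℝ)..1, M ^ 2 by
        norm_num, ← intervalIntegral.integral_add (hint (by fun_prop)) (hint (by fun_prop))]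
    refine intervalIntegral.integral_mono_on (by norm_num) (hint (by fun_prop))
      (hint (by fun_prop)) fun t _ => ?_
    rw [← sq_abs (g t - _)]
    nlinarith [sq_nonneg (|g t - legendreSum g N t| - M)]
  have := integral_sub_legendreSum_sq_le hg N
  refine le_of_mul_le_mul_left ?_ (by positivity : 0 < 2 * M)
  linarith

end LegendreSeries

section LegendreConvergence

variable {h k : ℝ → ℝ}

theorem integral_legendreP_mul_deriv
    (hh : ∀ t ∈ Set.Icc (-1 : ℝ) 1, HasDerivWithinAt h (k t) (Set.Icc (-1) 1) t)
    (hk : ContinuousOn k (Set.Icc (-1) 1)) (p : Polynomial ℝ) :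
    ∫ t in (-1 : ℝ)..1, p.eval t * k t = p.eval 1 * h 1 - p.eval (-1) * h (-1) -
      ∫ t in (-1 : ℝ)..1, p.derivative.eval t * h t := by
  refine intervalIntegral.integral_mul_deriv_eq_deriv_mul_of_hasDerivWithinAt
    (fun t _ => p.hasDerivWithinAt t _) ?_ (p.derivative.continuous.intervalIntegrable _ _)
    (hk.intervalIntegrable_of_Icc (by norm_num))
  rwa [Set.uIcc_of_le (by norm_num)]

theorem legendreCoeff_succ_of_hasDerivWithinAt
    (hh : ∀ t ∈ Set.Icc (-1 : ℝ) 1, HasDerivWithinAt h (k t) (Set.Icc (-1) 1) t)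
    (hk : ContinuousOn k (Set.Icc (-1) 1)) (n : ℕ) :
    legendreCoeff h (n + 1) = ((∫ t in (-1 : ℝ)..1, (legendreP n).eval t * k t) -
      ∫ t in (-1 : ℝ)..1, (legendreP (n + 2)).eval t * k t) / 2 := by
  have hcont : ContinuousOn h (Set.Icc (-1) 1) := fun t ht => (hh t ht).continuousWithinAt
  have hn := integral_legendreP_mul_deriv hh hk (legendreP n)
  have hn2 := integral_legendreP_mul_deriv hh hk (legendreP (n + 2))
  have hderiv : ∀ t, (legendreP (n + 2)).derivative.eval t * h t =
      (2 * n + 3) * ((legendreP (n + 1)).eval t * h t) +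
        (legendreP n).derivative.eval t * h t := fun t => by
    rw [derivative_legendreP_add_two]
    simp only [Polynomial.eval_add, Polynomial.eval_mul, Polynomial.eval_ofNat,
      Polynomial.eval_natCast]
    ring
  simp_rw [hderiv] at hn2
  rw [intervalIntegral.integral_add
      (ContinuousOn.intervalIntegrable_of_Icc (by norm_num) (by fun_prop))
      (ContinuousOn.intervalIntegrable_of_Icc (by norm_num) (by fun_prop)),
    intervalIntegral.integral_const_mul] at hn2
  rw [legendreCoeff]
  simp only [eval_one_legendreP, one_mul, eval_neg_one_legendreP, pow_add, even_two, Even.neg_pow,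
    one_pow, mul_one, Nat.cast_add, Nat.cast_one, smul_eq_mul] at hn hn2 ⊢
  linear_combination (hn2 - hn) / 2

theorem legendreSum_succ_of_hasDerivWithinAt
    (hh : ∀ t ∈ Set.Icc (-1 : ℝ) 1, HasDerivWithinAt h (k t) (Set.Icc (-1) 1) t)
    (hk : ContinuousOn k (Set.Icc (-1) 1)) (s : ℝ) (N : ℕ) :
    legendreSum h (N + 1) s = h (-1) + (∫ t in (-1 : ℝ)..s, legendreSum k (N + 1) t) -
      (∫ t in (-1 : ℝ)..1, (legendreP N).eval t * k t) / 2 * (legendreP (N + 1)).eval s -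
      (∫ t in (-1 : ℝ)..1, (legendreP (N + 1)).eval t * k t) / 2 * (legendreP N).eval s := by
  induction N with
  | zero =>
    have h0 := integral_legendreP_mul_deriv hh hk 1
    have h1 := integral_legendreP_mul_deriv hh hk Polynomial.X
    simp [legendreSum, legendreCoeff, legendreP_one] at h0 h1 ⊢
    linear_combination h1 / 2 - h0 / 2
  | succ N ih =>
    rw [legendreSum_succ h, ih, legendreCoeff_succ_of_hasDerivWithinAt hh hk]
    simp_rw [legendreSum_succ k (N + 1), smul_eq_mul]
    rw [intervalIntegral.integral_add (Continuous.intervalIntegrable (by fun_prop) _ _)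
      (Continuous.intervalIntegrable (by fun_prop) _ _), intervalIntegral.integral_mul_const,
      legendreCoeff]
    simp only [smul_eq_mul]
    push_cast
    linear_combination (∫ t in (-1 : ℝ)..1, (legendreP (N + 1)).eval t * k t) / 2 *
      -(integral_legendreP_succ N s)

theorem abs_integral_legendreP_mul_le {M : ℝ} (hkM : ∀ t ∈ Set.Icc (-1) 1, |k t| ≤ M) (n : ℕ) :
    |∫ t in (-1 : ℝ)..1, (legendreP n).eval t * k t| ≤ 2 * M := by
  have := intervalIntegral.norm_integral_le_of_norm_le_const (a := -1) (b := 1) (C := M)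
    (f := fun t => (legendreP n).eval t * k t) fun t ht => by
      rw [Set.uIoc_of_le (by norm_num)] at ht
      have ht := Set.Ioc_subset_Icc_self ht
      simpa using mul_le_mul (abs_eval_legendreP_le_one n ht) (hkM t ht) (abs_nonneg _)
        zero_le_one
  norm_num at this
  linarith

theorem abs_sub_legendreSum_le
    (hh : ∀ t ∈ Set.Icc (-1 : ℝ) 1, HasDerivWithinAt h (k t) (Set.Icc (-1) 1) t)
    (hk : ContinuousOn k (Set.Icc (-1) 1)) {M : ℝ} (hM : 0 < M)
    (hkM : ∀ t ∈ Set.Icc (-1) 1, |k t| ≤ M) (N : ℕ) {s : ℝ} (hs : s ∈ Set.Icc (-1) 1) :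
    |h s - legendreSum h (N + 1) s| ≤ 4 * M := by
  have hsub : Set.Icc (-1) s ⊆ Set.Icc (-1) 1 := Set.Icc_subset_Icc_right hs.2
  have hremInt : IntervalIntegrable (fun t => k t - legendreSum k (N + 1) t) volume (-1) 1 :=
    ContinuousOn.intervalIntegrable_of_Icc (by norm_num) (by fun_prop)
  have hftc : ∫ t in (-1 : ℝ)..s, k t = h s - h (-1) :=
    intervalIntegral.integral_eq_sub_of_hasDerivAt_of_le hs.1
      (fun t ht => ((hh t (hsub ht)).continuousWithinAt.mono hsub))
      (fun t ht => (hh t (hsub (Ioo_subset_Icc_self ht))).hasDerivAt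
        (Icc_mem_nhds ht.1 (ht.2.trans_le hs.2)))
      ((hk.mono hsub).intervalIntegrable_of_Icc hs.1)
  have hrem : |∫ t in (-1 : ℝ)..s, (k t - legendreSum k (N + 1) t)| ≤ 2 * M := by
    refine (intervalIntegral.abs_integral_le_integral_abs hs.1).trans
      (le_trans ?_ (integral_abs_sub_legendreSum_le hk hM hkM (N + 1)))
    exact intervalIntegral.integral_mono_interval le_rfl hs.1 hs.2
      (ae_of_all _ fun t => abs_nonneg _) hremInt.abs
  have hterm (m n : ℕ) : |(∫ t in (-1 : ℝ)..1, (legendreP m).eval t * k t) / 2 *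
      (legendreP n).eval s| ≤ M := by
    rw [abs_mul, abs_div, abs_two]
    have := mul_le_mul (abs_integral_legendreP_mul_le hkM m) (abs_eval_legendreP_le_one n hs)
      (abs_nonneg _) (by positivity)
    linarith
  rw [intervalIntegral.integral_sub ((hk.mono hsub).intervalIntegrable_of_Icc hs.1)
    (Continuous.intervalIntegrable (by fun_prop) _ _), hftc] at hrem
  rw [legendreSum_succ_of_hasDerivWithinAt hh hk]
  have h1 := abs_le.1 hrem
  have h2 := abs_le.1 (hterm N (N + 1))
  have h3 := abs_le.1 (hterm (N + 1) N)
  exact abs_le.2 ⟨by linarith, by linarith⟩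

theorem exists_polynomial_derivative_eq {K : Type*} [Field K] [CharZero K] (p : Polynomial K) :
    ∃ P : Polynomial K, P.derivative = p := by
  induction p using Polynomial.induction_on' with
  | add p r hp hr =>
    obtain ⟨P, rfl⟩ := hp
    obtain ⟨R, rfl⟩ := hr
    exact ⟨P + R, Polynomial.derivative_add⟩
  | monomial n a =>
    refine ⟨Polynomial.monomial (n + 1) (a / (n + 1)), ?_⟩
    rw [Polynomial.derivative_monomial, Nat.add_sub_cancel, Nat.cast_succ,
      div_mul_cancel₀ _ (Nat.cast_add_one_ne_zero n)]

theorem tendstoUniformlyOn_legendreSum_real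
    (hh : ∀ t ∈ Set.Icc (-1 : ℝ) 1, HasDerivWithinAt h (k t) (Set.Icc (-1) 1) t)
    (hk : ContinuousOn k (Set.Icc (-1) 1)) :
    TendstoUniformlyOn (legendreSum h) h atTop (Set.Icc (-1) 1) := by
  rw [Metric.tendstoUniformlyOn_iff]
  intro δ hδ
  obtain ⟨p, hp⟩ := exists_polynomial_near_of_continuousOn (-1) 1 k hk (δ / 8) (by positivity)
  obtain ⟨P, hP⟩ := exists_polynomial_derivative_eq p
  have hrem : ∀ t ∈ Set.Icc (-1 : ℝ) 1,
      HasDerivWithinAt (fun t => h t - P.eval t) (k t - p.eval t) (Set.Icc (-1) 1) t :=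
    fun t ht => hP ▸ (hh t ht).sub (P.hasDerivWithinAt t _)
  have hcont : ContinuousOn (fun t => h t - P.eval t) (Set.Icc (-1) 1) :=
    fun t ht => (hrem t ht).continuousWithinAt
  filter_upwards [eventually_legendreSum_eval_eq P, eventually_ge_atTop 1] with N hN hN1 s hs
  obtain ⟨N, rfl⟩ := Nat.exists_eq_add_of_le' hN1
  have hle := abs_sub_legendreSum_le hrem (hk.sub p.continuousOn) (by positivity)
    (fun t ht => (abs_sub_comm _ _).trans_le (hp t ht).le) N hs
  have hsplit := legendreSum_add hcont P.continuousOn (N + 1) s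
  simp only [sub_add_cancel, hN] at hsplit
  rw [Real.dist_eq, hsplit, add_comm, ← sub_sub]
  linarith

theorem tendstoUniformlyOn_legendreSum {g g' : ℝ → ℂ}
    (hg : ∀ t ∈ Set.Icc (-1 : ℝ) 1, HasDerivWithinAt g (g' t) (Set.Icc (-1) 1) t)
    (hg' : ContinuousOn g' (Set.Icc (-1) 1)) :
    TendstoUniformlyOn (legendreSum g) g atTop (Set.Icc (-1) 1) := by
  have hcont : ContinuousOn g (Set.Icc (-1) 1) := fun t ht => (hg t ht).continuousWithinAt
  have hre := tendstoUniformlyOn_legendreSum_real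
    (fun t ht => reCLM.hasFDerivAt.comp_hasDerivWithinAt t (hg t ht))
    (reCLM.continuous.comp_continuousOn hg')
  have him := tendstoUniformlyOn_legendreSum_real
    (fun t ht => imCLM.hasFDerivAt.comp_hasDerivWithinAt t (hg t ht))
    (imCLM.continuous.comp_continuousOn hg')
  rw [Metric.tendstoUniformlyOn_iff] at hre him ⊢
  intro δ hδ
  filter_upwards [hre (δ / 2) (by positivity), him (δ / 2) (by positivity)] with N hN hN' s hs
  have hre' := hN s hs
  have him' := hN' s hs
  simp only [Function.comp_def] at hre' him'
  rw [legendreSum_continuousLinearMap_comp reCLM hcont, Real.dist_eq, ← map_sub,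
    reCLM_apply] at hre'
  rw [legendreSum_continuousLinearMap_comp imCLM hcont, Real.dist_eq, ← map_sub,
    imCLM_apply] at him'
  rw [dist_eq_norm]
  linarith [norm_le_abs_re_add_abs_im (g s - legendreSum g N s)]

end LegendreConvergence

theorem exists_tendsto_zero_forall_dist_le {α β ι : Type*} [TopologicalSpace α]
    [PseudoMetricSpace β] {l : Filter ι} {F : ι → α → β} {f : α → β} {K : Set α}
    (hK : IsCompact K) (hF : ∀ i, ContinuousOn (F i) K) (hf : ContinuousOn f K)
    (hlim : TendstoUniformlyOn F f l K) :
    ∃ η : ι → ℝ, (∀ i, 0 ≤ η i) ∧ Tendsto η l (𝓝 0) ∧ ∀ i, ∀ x ∈ K, dist (f x) (F i x) ≤ η i := by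
  have hη0 (i : ι) : 0 ≤ ⨆ x : K, dist (f x) (F i x) := Real.iSup_nonneg fun _ => dist_nonneg
  refine ⟨fun i => ⨆ x : K, dist (f x) (F i x), hη0, ?_, fun i x hx => ?_⟩
  · rw [Metric.tendsto_nhds]
    intro δ hδ
    filter_upwards [Metric.tendstoUniformlyOn_iff.1 hlim (δ / 2) (half_pos hδ)] with i hi
    rw [Real.dist_0_eq_abs, abs_of_nonneg (hη0 i)]
    exact (Real.iSup_le (fun x : K => (hi x x.2).le) (half_pos hδ).le).trans_lt (half_lt_self hδ)
  · have hbdd : BddAbove ((fun x => dist (f x) (F i x)) '' K) :=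
      (hK.image_of_continuousOn (continuous_dist.comp_continuousOn (hf.prodMk (hF i)))).bddAbove
    rw [Set.image_eq_range] at hbdd
    exact le_ciSup hbdd ⟨x, hx⟩

section ParametricCalculus

variable {E : Type*} [NormedAddCommGroup E] [NormedSpace ℝ E]

theorem hasDerivAt_comp_of_continuous_partials {F F₁ F₂ : ℝ → ℝ → E}
    (h₁ : ∀ s t, HasDerivAt (fun s => F s t) (F₁ s t) s)
    (h₂ : ∀ s t, HasDerivAt (fun t => F s t) (F₂ s t) t)
    (hc₁ : Continuous (Function.uncurry F₁)) (hc₂ : Continuous (Function.uncurry F₂))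
    {a b : ℝ → ℝ} {a' b' s : ℝ} (ha : HasDerivAt a a' s) (hb : HasDerivAt b b' s) :
    HasDerivAt (fun s => F (a s) (b s)) (a' • F₁ (a s) (b s) + b' • F₂ (a s) (b s)) s := by
  let L : E →L[ℝ] ℝ →L[ℝ] E := ContinuousLinearMap.smulRightL ℝ ℝ E 1
  have hF := hasStrictFDerivAt_uncurry_coprod (u := (a s, b s)) (f := F)
    (f₁ := fun s t => L (F₁ s t)) (f₂ := fun s t => L (F₂ s t))
    (.of_forall fun v => (h₁ v.1 v.2).hasFDerivAt) (.of_forall fun v => (h₂ v.1 v.2).hasFDerivAt)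
    (L.continuous.comp hc₁).continuousAt (L.continuous.comp hc₂).continuousAt
  refine (hF.hasFDerivAt.comp_hasDerivAt s (ha.prodMk hb)).congr_deriv ?_
  simp [L, Function.HasUncurry.uncurry]

theorem hasDerivAt_integral_of_continuous_partial {F F₁ : ℝ → ℝ → E}
    (hF : Continuous (Function.uncurry F)) (hF₁ : Continuous (Function.uncurry F₁))
    (h₁ : ∀ s t, HasDerivAt (fun s => F s t) (F₁ s t) s) (a b s : ℝ) :
    HasDerivAt (fun s => ∫ t in a..b, F s t) (∫ t in a..b, F₁ s t) s := by
  obtain ⟨M, hM⟩ := ((isCompact_closedBall s 1).prod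
    (isCompact_uIcc (a := a) (b := b))).exists_bound_of_continuousOn hF₁.continuousOn
  refine (intervalIntegral.hasDerivAt_integral_of_dominated_loc_of_deriv_le
    (Metric.closedBall_mem_nhds s one_pos) (.of_forall fun x => ?_) ?_ ?_
    (.of_forall fun t ht x hx => hM (x, t) ⟨hx, Set.uIoc_subset_uIcc ht⟩)
    intervalIntegrable_const (.of_forall fun t _ x _ => h₁ x t)).2
  · exact (hF.uncurry_left x).aestronglyMeasurable
  · exact (hF.uncurry_left s).intervalIntegrable _ _
  · exact (hF₁.uncurry_left s).aestronglyMeasurable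

theorem hasDerivAt_integral_of_continuous_partial_of_hasDerivAt [CompleteSpace E]
    {F F₁ : ℝ → ℝ → E}
    (hF : Continuous (Function.uncurry F)) (hF₁ : Continuous (Function.uncurry F₁))
    (h₁ : ∀ s t, HasDerivAt (fun s => F s t) (F₁ s t) s) (c : ℝ) {b : ℝ → ℝ} {b' s : ℝ}
    (hb : HasDerivAt b b' s) :
    HasDerivAt (fun s => ∫ t in c..b s, F s t) ((∫ t in c..b s, F₁ s t) + b' • F s (b s)) s := by
  have h := hasDerivAt_comp_of_continuous_partials
    (F := fun s x => ∫ t in c..x, F s t) (F₁ := fun s x => ∫ t in c..x, F₁ s t) (F₂ := F)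
    (fun s x => hasDerivAt_integral_of_continuous_partial hF hF₁ h₁ c x s)
    (fun s x => ((hF.uncurry_left s).integral_hasStrictDerivAt c x).hasDerivAt)
    (by unfold Function.uncurry; fun_prop) hF (hasDerivAt_id s) hb
  simpa using h

end ParametricCalculus

section Goursat

variable {𝔸 : Type*} [NormedRing 𝔸] [NormedAlgebra ℝ 𝔸]

/-- The Volterra operator `g ↦ ∫₀ᵘ ∫₀ᵛ A g` of the Goursat problem `∂ᵤ∂ᵥ G = A G`, acting on
`C(ℝ × ℝ, 𝔸)` with the topology of locally uniform convergence. -/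
def goursatIntegral (A : C(ℝ × ℝ, 𝔸)) : C(ℝ × ℝ, 𝔸) →L[ℝ] C(ℝ × ℝ, 𝔸) where
  toFun g := ⟨fun p => ∫ α in (0 : ℝ)..p.1, ∫ β in (0 : ℝ)..p.2, A (α, β) * g (α, β), by fun_prop⟩
  map_add' g₁ g₂ := by
    ext p
    simp only [ContinuousMap.add_apply, ContinuousMap.coe_mk, mul_add]
    rw [← intervalIntegral.integral_add (by apply Continuous.intervalIntegrable; fun_prop)
      (by apply Continuous.intervalIntegrable; fun_prop)]
    refine intervalIntegral.integral_congr fun α _ => intervalIntegral.integral_add ?_ ?_ <;>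
      exact Continuous.intervalIntegrable (by fun_prop) _ _
  map_smul' c g := by
    ext p
    simp
  cont := ContinuousMap.continuous_of_continuous_uncurry _ <| by
    simp only [Function.uncurry_def, ContinuousMap.coe_mk]
    fun_prop

theorem norm_goursatIntegral_apply_le {A g : C(ℝ × ℝ, 𝔸)} {M K R : ℝ} {n : ℕ}
    (hA : ∀ p, ‖p‖ ≤ R → ‖A p‖ ≤ M) (hg : ∀ p, ‖p‖ ≤ R → ‖g p‖ ≤ K * |p.1| ^ n)
    {p : ℝ × ℝ} (hp : ‖p‖ ≤ R) :
    ‖goursatIntegral A g p‖ ≤ M * R * K * (|p.1| ^ (n + 1) / (n + 1)) := by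
  obtain ⟨u, v⟩ := p
  have hR : |v| ≤ R := (norm_snd_le (u, v)).trans hp
  have h_mem : ∀ α ∈ uIoc 0 u, ∀ β ∈ uIcc 0 v, ‖(α, β)‖ ≤ R := fun α hα β hβ =>
    (max_le_max (by simpa using abs_sub_left_of_mem_uIcc (uIoc_subset_uIcc hα))
      (by simpa using abs_sub_left_of_mem_uIcc hβ)).trans hp
  have h_inner : ∀ α ∈ uIoc 0 u,
      ‖∫ β in (0 : ℝ)..v, A (α, β) * g (α, β)‖ ≤ M * R * K * |α| ^ n := by
    intro α hα
    have h_integrand : ∀ β ∈ uIcc 0 v, ‖A (α, β) * g (α, β)‖ ≤ M * (K * |α| ^ n) := fun β hβ =>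
      norm_mul_le_of_le (hA _ (h_mem α hα β hβ)) (hg _ (h_mem α hα β hβ))
    have h_nonneg := (norm_nonneg _).trans (h_integrand v right_mem_uIcc)
    calc ‖∫ β in (0 : ℝ)..v, A (α, β) * g (α, β)‖ ≤ M * (K * |α| ^ n) * |v - 0| :=
          intervalIntegral.norm_integral_le_of_norm_le_const fun β hβ =>
            h_integrand β (uIoc_subset_uIcc hβ)
      _ ≤ M * (K * |α| ^ n) * R := by rw [sub_zero]; gcongr
      _ = M * R * K * |α| ^ n := by ring
  calc ‖goursatIntegral A g (u, v)‖
      ≤ ∫ α in uIoc 0 u, ‖∫ β in (0 : ℝ)..v, A (α, β) * g (α, β)‖ :=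
        intervalIntegral.norm_integral_le_integral_norm_uIoc
    _ ≤ ∫ α in uIoc 0 u, M * R * K * |α| ^ n := by
        refine setIntegral_mono_on ?_ ?_ measurableSet_uIoc h_inner <;>
          exact (Continuous.integrableOn_uIcc (by fun_prop)).mono_set uIoc_subset_uIcc
    _ = M * R * K * (|u| ^ (n + 1) / (n + 1)) := by
        rw [integral_const_mul]
        simpa using Or.inl (integral_pow_abs_sub_uIoc (a := 0) (b := u) n)

theorem norm_goursatIntegral_pow_apply_le {A φ : C(ℝ × ℝ, 𝔸)} {M K R : ℝ}
    (hA : ∀ p, ‖p‖ ≤ R → ‖A p‖ ≤ M) (hφ : ∀ p, ‖p‖ ≤ R → ‖φ p‖ ≤ K) (n : ℕ) :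
    ∀ p, ‖p‖ ≤ R → ‖(goursatIntegral A ^ n) φ p‖ ≤ (M * R) ^ n * K / n.factorial * |p.1| ^ n := by
  induction n with
  | zero => simpa using hφ
  | succ n ih =>
    intro p hp
    calc ‖(goursatIntegral A ^ (n + 1)) φ p‖
        = ‖goursatIntegral A ((goursatIntegral A ^ n) φ) p‖ := by rw [pow_succ']; rfl
      _ ≤ M * R * ((M * R) ^ n * K / n.factorial) * (|p.1| ^ (n + 1) / (n + 1)) :=
        norm_goursatIntegral_apply_le hA ih hp
      _ = (M * R) ^ (n + 1) * K / (n + 1).factorial * |p.1| ^ (n + 1) := by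
        rw [Nat.factorial_succ]; push_cast; field_simp; ring

theorem summable_goursatIntegral_pow [CompleteSpace 𝔸] (A φ : C(ℝ × ℝ, 𝔸)) :
    Summable fun n => (goursatIntegral A ^ n) φ := by
  refine ContinuousMap.summable_of_locally_summable_norm fun K => ?_
  obtain ⟨R, hR, hKR⟩ := K.isCompact.isBounded.exists_pos_norm_le
  have h_bound (ψ : C(ℝ × ℝ, 𝔸)) : ∃ M, 0 ≤ M ∧ ∀ p, ‖p‖ ≤ R → ‖ψ p‖ ≤ M := by
    obtain ⟨M, hM⟩ := (isCompact_closedBall (0 : ℝ × ℝ) R).exists_bound_of_continuousOn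
      ψ.continuous.continuousOn
    simp only [mem_closedBall_zero_iff] at hM
    exact ⟨M, (norm_nonneg _).trans (hM 0 (by simpa using hR.le)), hM⟩
  obtain ⟨M, hM₀, hM⟩ := h_bound A
  obtain ⟨L, hL₀, hL⟩ := h_bound φ
  refine .of_nonneg_of_le (fun _ => norm_nonneg _) (fun n => ?_)
    ((Real.summable_pow_div_factorial (M * R * R)).mul_left L)
  refine (ContinuousMap.norm_le _ (by positivity)).2 fun p => ?_
  calc ‖(goursatIntegral A ^ n) φ p‖ ≤ (M * R) ^ n * L / n.factorial * |(p : ℝ × ℝ).1| ^ n :=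
        norm_goursatIntegral_pow_apply_le hM hL n p (hKR p p.2)
    _ ≤ (M * R) ^ n * L / n.factorial * R ^ n := by
        gcongr
        exact (norm_fst_le (p : ℝ × ℝ)).trans (hKR p p.2)
    _ = L * ((M * R * R) ^ n / n.factorial) := by ring

theorem exists_eq_add_goursatIntegral [CompleteSpace 𝔸] (A φ : C(ℝ × ℝ, 𝔸)) :
    ∃ G, G = φ + goursatIntegral A G := by
  have h := summable_goursatIntegral_pow A φ
  refine ⟨∑' n, (goursatIntegral A ^ n) φ, ?_⟩
  rw [ContinuousLinearMap.map_tsum _ h, h.tsum_eq_zero_add]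
  simp [pow_succ']

end Goursat

section Transmutation

/-- `H` is the kernel, in the characteristic coordinates `u = (x + t) / 2`, `v = (x - t) / 2`, of
the operator transmuting `∂²` into `∂² - Q`: it solves the Goursat problem `∂ᵤ∂ᵥ H = Q(u + v) H`,
`H(u, 0) = ½ ∫₀ᵘ Q`, `H(0, v) = 0`. The functions `Hu` and `Hv` are its partial derivatives. -/
structure IsGoursatKernel (Q : ℝ → ℂ) (H Hu Hv : ℝ → ℝ → ℂ) : Prop where
  continuous : Continuous (Function.uncurry H)
  continuous_left : Continuous (Function.uncurry Hu)
  continuous_right : Continuous (Function.uncurry Hv)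
  hasDerivAt_left : ∀ u v, HasDerivAt (fun u => H u v) (Hu u v) u
  hasDerivAt_right : ∀ u v, HasDerivAt (fun v => H u v) (Hv u v) v
  hasDerivAt_mixed : ∀ u v, HasDerivAt (fun u => Hv u v) (Q (u + v) * H u v) u
  apply_zero_right : ∀ u, H u 0 = 1 / 2 * ∫ s in (0 : ℝ)..u, Q s
  apply_zero_left : ∀ v, H 0 v = 0

theorem exists_isGoursatKernel {Q : ℝ → ℂ} (hQ : Continuous Q) :
    ∃ H Hu Hv, IsGoursatKernel Q H Hu Hv := by
  obtain ⟨G, hG⟩ := exists_eq_add_goursatIntegral ⟨fun p => Q (p.1 + p.2), by fun_prop⟩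
    ⟨fun p => 1 / 2 * ∫ s in (0 : ℝ)..p.1, Q s, by fun_prop⟩
  have hGuv (u v : ℝ) : G (u, v) = 1 / 2 * (∫ s in (0 : ℝ)..u, Q s) +
      ∫ α in (0 : ℝ)..u, ∫ β in (0 : ℝ)..v, Q (α + β) * G (α, β) := DFunLike.congr_fun hG (u, v)
  have hQint (u : ℝ) : HasDerivAt (fun u => 1 / 2 * ∫ s in (0 : ℝ)..u, Q s) (1 / 2 * Q u) u :=
    ((hQ.integral_hasStrictDerivAt 0 u).hasDerivAt).const_mul _
  refine ⟨fun u v => G (u, v), fun u v => 1 / 2 * Q u + ∫ β in (0 : ℝ)..v, Q (u + β) * G (u, β),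
    fun u v => ∫ α in (0 : ℝ)..u, Q (α + v) * G (α, v), ?_, ?_, ?_, fun u v => ?_, fun u v => ?_,
    fun u v => ?_, fun u => ?_, fun v => ?_⟩
  · fun_prop
  · simp only [Function.uncurry_def]; fun_prop
  · simp only [Function.uncurry_def]; fun_prop
  · simp only [hGuv _ v]
    refine (hQint u).add (Continuous.integral_hasStrictDerivAt ?_ 0 u).hasDerivAt
    fun_prop
  · simp only [hGuv u]
    refine (hasDerivAt_integral_of_continuous_partial
      (F := fun v α => ∫ β in (0 : ℝ)..v, Q (α + β) * G (α, β))
      (F₁ := fun v α => Q (α + v) * G (α, v)) ?_ ?_ (fun v α => ?_) 0 u v).const_add _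
    · simp only [Function.uncurry_def]; fun_prop
    · fun_prop
    · exact (Continuous.integral_hasStrictDerivAt (by fun_prop) 0 v).hasDerivAt
  · exact (Continuous.integral_hasStrictDerivAt (by fun_prop) 0 u).hasDerivAt
  · simp [hGuv u 0]
  · simp [hGuv 0 v]

/-- The integral of `(u, v) ↦ F(u, v) h(u - v)` over the segment `u + v = x`, `0 ≤ u ≤ x`, for the
parameter `u`. -/
def antidiagIntegral (F : ℝ → ℝ → ℂ) (h : ℝ → ℂ) (x : ℝ) : ℂ :=
  ∫ u in (0 : ℝ)..x, F u (x - u) * h (2 * u - x)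

theorem antidiagIntegral_swap (F : ℝ → ℝ → ℂ) (h : ℝ → ℂ) :
    antidiagIntegral (fun u v => F v u) (fun t => h (-t)) = antidiagIntegral F h := by
  ext x
  have := intervalIntegral.integral_comp_sub_left (a := 0) (b := x)
    (fun u => F u (x - u) * h (2 * u - x)) x
  simp only [sub_self, sub_zero] at this
  rw [antidiagIntegral, antidiagIntegral, ← this]
  congr 1; ext u; congr 2 <;> ring

theorem hasDerivAt_antidiagIntegral_right {F F₂ : ℝ → ℝ → ℂ} {h h' : ℝ → ℂ}
    (hF : Continuous (Function.uncurry F)) (hF₂ : Continuous (Function.uncurry F₂))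
    (hd : ∀ u v, HasDerivAt (fun v => F u v) (F₂ u v) v)
    (hh : ∀ t, HasDerivAt h (h' t) t) (hh' : Continuous h') (x : ℝ) :
    HasDerivAt (antidiagIntegral F h)
      (F x 0 * h x + antidiagIntegral F₂ h x - antidiagIntegral F h' x) x := by
  have hc : Continuous h := continuous_iff_continuousAt.2 fun t => (hh t).continuousAt
  have := hasDerivAt_integral_of_continuous_partial_of_hasDerivAt
    (F := fun x u => F u (x - u) * h (2 * u - x))
    (F₁ := fun x u => F₂ u (x - u) * h (2 * u - x) - F u (x - u) * h' (2 * u - x))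
    (by fun_prop) (by fun_prop) (fun x u => ?_) 0 (hasDerivAt_id x)
  · refine this.congr_deriv ?_
    simp only [id_eq, sub_self, two_mul, add_sub_cancel_right, one_smul]
    rw [intervalIntegral.integral_sub (by apply Continuous.intervalIntegrable; fun_prop)
      (by apply Continuous.intervalIntegrable; fun_prop)]
    simp only [antidiagIntegral, two_mul]
    ring
  · have hF' : HasDerivAt (fun x => F u (x - u)) (F₂ u (x - u)) x := (hd u _).comp_sub_const x u
    have hh' : HasDerivAt (fun x => h (2 * u - x)) (-h' (2 * u - x)) x :=
      (hh _).comp_const_sub (2 * u) x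
    exact (hF'.mul hh').congr_deriv (by ring)

theorem hasDerivAt_antidiagIntegral_left {F F₁ : ℝ → ℝ → ℂ} {h h' : ℝ → ℂ}
    (hF : Continuous (Function.uncurry F)) (hF₁ : Continuous (Function.uncurry F₁))
    (hd : ∀ u v, HasDerivAt (fun u => F u v) (F₁ u v) u)
    (hh : ∀ t, HasDerivAt h (h' t) t) (hh' : Continuous h') (x : ℝ) :
    HasDerivAt (antidiagIntegral F h)
      (F 0 x * h (-x) + antidiagIntegral F₁ h x + antidiagIntegral F h' x) x := by
  have := hasDerivAt_antidiagIntegral_right (F := fun u v => F v u) (F₂ := fun u v => F₁ v u)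
    (h' := fun t => -h' (-t)) (by fun_prop) (by fun_prop) (fun u v => hd v u)
    (fun t => ((hh (-t)).scomp t (hasDerivAt_neg t)).congr_deriv (by simp)) (by fun_prop) x
  rw [Function.comp_def, antidiagIntegral_swap F h] at this
  refine this.congr_deriv ?_
  rw [antidiagIntegral_swap F₁ h, ← antidiagIntegral_swap F h', sub_eq_add_neg]
  simp [antidiagIntegral]

/-- The transmutation operator `h ↦ h + ∫₋ₓˣ K(x, t) h(t) dt` with
`K(x, t) = H((x + t) / 2, (x - t) / 2)`; the factor `2` is the Jacobian of `t = 2u - x`. -/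
def transmute (H : ℝ → ℝ → ℂ) (h : ℝ → ℂ) (x : ℝ) : ℂ :=
  h x + 2 * antidiagIntegral H h x

/-- The derivative of `transmute H h` for `h` with derivative `h'` and `H` with partial derivative
`Hv` in the second variable. -/
def transmuteDeriv (H Hv : ℝ → ℝ → ℂ) (h h' : ℝ → ℂ) (x : ℝ) : ℂ :=
  h' x + 2 * (H x 0 * h x + antidiagIntegral Hv h x - antidiagIntegral H h' x)

@[simp]
theorem transmute_zero (H : ℝ → ℝ → ℂ) (h : ℝ → ℂ) : transmute H h 0 = h 0 := by
  simp [transmute, antidiagIntegral]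

theorem antidiagIntegral_const_mul (F : ℝ → ℝ → ℂ) (c : ℂ) (h : ℝ → ℂ) (x : ℝ) :
    antidiagIntegral F (fun t => c * h t) x = c * antidiagIntegral F h x := by
  simp only [antidiagIntegral, mul_left_comm _ c, intervalIntegral.integral_const_mul]

theorem transmute_const_mul (H : ℝ → ℝ → ℂ) (c : ℂ) (h : ℝ → ℂ) (x : ℝ) :
    transmute H (fun t => c * h t) x = c * transmute H h x := by
  rw [transmute, transmute, antidiagIntegral_const_mul]
  ring

namespace IsGoursatKernel

variable {Q : ℝ → ℂ} {H Hu Hv : ℝ → ℝ → ℂ} {h h' h'' : ℝ → ℂ}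

theorem transmuteDeriv_zero (hH : IsGoursatKernel Q H Hu Hv) (h h' : ℝ → ℂ) :
    transmuteDeriv H Hv h h' 0 = h' 0 := by
  simp [transmuteDeriv, antidiagIntegral, hH.apply_zero_left]

theorem hasDerivAt_transmute (hH : IsGoursatKernel Q H Hu Hv)
    (hh : ∀ t, HasDerivAt h (h' t) t) (hc : Continuous h') (x : ℝ) :
    HasDerivAt (transmute H h) (transmuteDeriv H Hv h h' x) x :=
  (hh x).add ((hasDerivAt_antidiagIntegral_right hH.continuous hH.continuous_right
    hH.hasDerivAt_right hh hc x).const_mul 2)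

theorem hasDerivAt_transmuteDeriv (hH : IsGoursatKernel Q H Hu Hv) (hQ : Continuous Q)
    (hh : ∀ t, HasDerivAt h (h' t) t) (hh' : ∀ t, HasDerivAt h' (h'' t) t) (hc : Continuous h'')
    (x : ℝ) :
    HasDerivAt (transmuteDeriv H Hv h h') (Q x * transmute H h x + transmute H h'' x) x := by
  have hc' : Continuous h' := continuous_iff_continuousAt.2 fun t => (hh' t).continuousAt
  have hv0 (v : ℝ) : Hv 0 v = 0 := (hH.hasDerivAt_right 0 v).unique <| by
    simpa only [hH.apply_zero_left] using hasDerivAt_const v (0 : ℂ)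
  have hu0 : HasDerivAt (fun u => H u 0) (1 / 2 * Q x) x := by
    simp only [hH.apply_zero_right]
    exact (hQ.integral_hasStrictDerivAt 0 x).hasDerivAt.const_mul _
  have hmul :
      antidiagIntegral (fun u v => Q (u + v) * H u v) h x = Q x * antidiagIntegral H h x := by
    simp only [antidiagIntegral, add_sub_cancel, mul_assoc, intervalIntegral.integral_const_mul]
  have hcont := hH.continuous
  have h_left := hasDerivAt_antidiagIntegral_left hH.continuous_right
    (F₁ := fun u v => Q (u + v) * H u v) (by fun_prop) hH.hasDerivAt_mixed hh hc' x
  have h_right := hasDerivAt_antidiagIntegral_right hH.continuous hH.continuous_right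
    hH.hasDerivAt_right hh' hc x
  rw [hv0, hmul] at h_left
  refine ((hh' x).add ((((hu0.mul (hh x)).add h_left).sub h_right).const_mul 2)).congr_deriv ?_
  rw [transmute, transmute]
  ring

end IsGoursatKernel

/-- The kernel of `transmute H` on `[-x, x]`, rescaled to `[-1, 1]`. -/
def kernelSlice (H : ℝ → ℝ → ℂ) (x s : ℝ) : ℂ :=
  x * H (x * (1 + s) / 2) (x * (1 - s) / 2)

theorem transmute_eq_add_integral_kernelSlice (H : ℝ → ℝ → ℂ) (h : ℝ → ℂ) (x : ℝ) :
    transmute H h x = h x + ∫ s in (-1 : ℝ)..1, kernelSlice H x s * h (x * s) := by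
  have h_subst := intervalIntegral.smul_integral_comp_mul_add (a := -1) (b := 1)
    (fun u => H u (x - u) * h (2 * u - x)) (x / 2) (x / 2)
  rw [show x / 2 * -1 + x / 2 = 0 by ring, show x / 2 * 1 + x / 2 = x by ring] at h_subst
  rw [transmute, antidiagIntegral, ← h_subst, Complex.real_smul,
    ← intervalIntegral.integral_const_mul, ← intervalIntegral.integral_const_mul]
  congr 2; ext s
  rw [kernelSlice, show x / 2 * s + x / 2 = x * (1 + s) / 2 by ring,
    show x - x * (1 + s) / 2 = x * (1 - s) / 2 by ring,
    show 2 * (x * (1 + s) / 2) - x = x * s by ring]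
  push_cast
  ring

theorem IsGoursatKernel.exists_hasDerivAt_kernelSlice {Q : ℝ → ℂ} {H Hu Hv : ℝ → ℝ → ℂ}
    (hH : IsGoursatKernel Q H Hu Hv) (x : ℝ) :
    ∃ k, Continuous k ∧ ∀ s, HasDerivAt (kernelSlice H x) (k s) s := by
  have h₁ := hH.continuous_left
  have h₂ := hH.continuous_right
  refine ⟨_, ?_, fun s => (hasDerivAt_comp_of_continuous_partials hH.hasDerivAt_left
    hH.hasDerivAt_right h₁ h₂ (((hasDerivAt_id s).const_add 1).const_mul x |>.div_const 2)
    (((hasDerivAt_id s).const_sub 1).const_mul x |>.div_const 2)).const_mul (x : ℂ)⟩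
  fun_prop

end Transmutation

section SecondOrderODE

variable {𝕜 E : Type*} [NormedField 𝕜] [NormedAddCommGroup E] [NormedSpace ℝ E] [NormedSpace 𝕜 E]

theorem eqOn_zero_of_hasDerivWithinAt_smul {c : ℝ → 𝕜} {y y' : ℝ → E} {a b : ℝ}
    (hc : ContinuousOn c (Icc a b)) (hy : ∀ x ∈ Icc a b, HasDerivWithinAt y (y' x) (Icc a b) x)
    (hy' : ∀ x ∈ Icc a b, HasDerivWithinAt y' (c x • y x) (Icc a b) x)
    (h₀ : y a = 0) (h₀' : y' a = 0) : EqOn y 0 (Icc a b) := by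
  obtain ⟨M, hM⟩ := isCompact_Icc.exists_bound_of_continuousOn hc
  have h_deriv : ∀ x ∈ Icc a b,
      HasDerivWithinAt (fun x => (y x, y' x)) (y' x, c x • y x) (Icc a b) x :=
    fun x hx => (hy x hx).prodMk (hy' x hx)
  have h_zero := eq_zero_of_abs_deriv_le_mul_abs_self_of_eq_zero_right (K := max 1 M)
    (fun x hx => (h_deriv x hx).continuousWithinAt)
    (fun x hx => (h_deriv x (Ico_subset_Icc_self hx)).mono_of_mem_nhdsWithin
      (Icc_mem_nhdsGE_of_mem hx)) (by simp [h₀, h₀']) fun x hx => by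
      refine max_le ?_ ?_
      · exact (norm_snd_le (y x, y' x)).trans
          (le_mul_of_one_le_left (norm_nonneg _) (le_max_left _ _))
      · exact (norm_smul_le _ _).trans <| mul_le_mul
          ((hM x (Ico_subset_Icc_self hx)).trans (le_max_right _ _)) (norm_fst_le (y x, y' x))
          (norm_nonneg _) (zero_le_one.trans (le_max_left _ _))
  exact fun x hx => congr_arg Prod.fst (h_zero x hx)

theorem eqOn_of_hasDerivWithinAt_smul_add {c : ℝ → 𝕜} {r y y' z z' : ℝ → E} {a b : ℝ}
    (hc : ContinuousOn c (Icc a b)) (hy : ∀ x ∈ Icc a b, HasDerivWithinAt y (y' x) (Icc a b) x)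
    (hy' : ∀ x ∈ Icc a b, HasDerivWithinAt y' (c x • y x + r x) (Icc a b) x)
    (hz : ∀ x ∈ Icc a b, HasDerivWithinAt z (z' x) (Icc a b) x)
    (hz' : ∀ x ∈ Icc a b, HasDerivWithinAt z' (c x • z x + r x) (Icc a b) x)
    (h₀ : y a = z a) (h₀' : y' a = z' a) : EqOn y z (Icc a b) := fun x hx =>
  sub_eq_zero.1 <| eqOn_zero_of_hasDerivWithinAt_smul (y := y - z) (y' := y' - z') hc
    (fun x hx => (hy x hx).sub (hz x hx))
    (fun x hx => ((hy' x hx).sub (hz' x hx)).congr_deriv (by simp [smul_sub]))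
    (by simp [h₀]) (by simp [h₀']) hx

end SecondOrderODE

section FormalPowers

theorem hasDerivWithinAt_integral_of_continuousOn_Icc {E : Type*} [NormedAddCommGroup E]
    [NormedSpace ℝ E] [CompleteSpace E] {g : ℝ → E} {a b x : ℝ} (hg : ContinuousOn g (Icc a b))
    (hx : x ∈ Icc a b) :
    HasDerivWithinAt (fun x => ∫ s in a..x, g s) (g x) (Icc a b) x := by
  have : Fact (x ∈ Icc a b) := ⟨hx⟩
  refine intervalIntegral.integral_hasDerivWithinAt_right ?_
    (hg.stronglyMeasurableAtFilter_nhdsWithin measurableSet_Icc x) (hg x hx)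
  exact (hg.mono (Icc_subset_Icc_right hx.2)).intervalIntegrable_of_Icc hx.1

theorem formalXt_inv (f : ℝ → ℂ) (n : ℕ) : formalXt f⁻¹ n = formalX f n := by
  induction n with
  | zero => rfl
  | succ n ih =>
    simp only [formalXt, formalX, ih, Pi.inv_apply, inv_pow, inv_zpow', pow_succ (-1 : ℤ),
      mul_neg_one]

theorem formalX_inv (f : ℝ → ℂ) (n : ℕ) : formalX f⁻¹ n = formalXt f n := by
  rw [← formalXt_inv, inv_inv]

/-- The quotient `φₖ / f` of the formal power `φₖ` of `f`. -/
def reducedPower (f : ℝ → ℂ) (k : ℕ) : ℝ → ℂ :=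
  if Odd k then formalX f k else formalXt f k

theorem formalPower_eq_mul_reducedPower (f : ℝ → ℂ) (k : ℕ) (x : ℝ) :
    formalPower f k x = f x * reducedPower f k x := by
  rw [formalPower, reducedPower]
  split_ifs <;> rfl

theorem reducedPower_zero (f : ℝ → ℂ) : reducedPower f 0 = fun _ => 1 := by
  simp only [reducedPower, Nat.not_odd_zero, if_false, formalXt]

/-- Replacing `f` by `1 / f` interchanges `X⁽ᵏ⁾` and `X̃⁽ᵏ⁾`, which absorbs the parity. -/
theorem reducedPower_succ (f : ℝ → ℂ) (k : ℕ) (x : ℝ) :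
    reducedPower f (k + 1) x =
      (k + 1 : ℂ) * ∫ s in (0 : ℝ)..x, reducedPower f⁻¹ k s * (f s ^ 2)⁻¹ := by
  rcases k.even_or_odd with hk | hk
  · rw [reducedPower, reducedPower, if_pos hk.add_one, if_neg (Nat.not_odd_iff_even.2 hk),
      formalXt_inv, formalX, hk.add_one.neg_one_pow]
    simp only [zpow_neg_one]
  · rw [reducedPower, reducedPower, if_neg (Nat.not_odd_iff_even.2 hk.add_one), if_pos hk,
      formalX_inv, formalXt, hk.neg_one_pow]
    simp only [zpow_neg_one]

theorem reducedPower_apply_zero (f : ℝ → ℂ) (k : ℕ) : reducedPower f k 0 = 0 ^ k := by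
  cases k with
  | zero => simp [reducedPower_zero]
  | succ k => simp [reducedPower_succ]

theorem continuousOn_reducedPower {b : ℝ} (k : ℕ) {f : ℝ → ℂ} (hf : ContinuousOn f (Icc 0 b))
    (hfne : ∀ x ∈ Icc 0 b, f x ≠ 0) : ContinuousOn (reducedPower f k) (Icc 0 b) := by
  induction k generalizing f with
  | zero => rw [reducedPower_zero]; exact continuousOn_const
  | succ k ih =>
    have h_inv : ContinuousOn (fun s => reducedPower f⁻¹ k s * (f s ^ 2)⁻¹) (Icc 0 b) :=
      (ih (hf.inv₀ hfne) fun x hx => inv_ne_zero (hfne x hx)).mul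
        ((hf.pow 2).inv₀ fun x hx => pow_ne_zero 2 (hfne x hx))
    refine ContinuousOn.congr (fun x hx => ?_) fun x _ => reducedPower_succ f k x
    exact ((hasDerivWithinAt_integral_of_continuousOn_Icc h_inv hx).const_mul _).continuousWithinAt

theorem hasDerivWithinAt_reducedPower {b x : ℝ} {f : ℝ → ℂ} (hf : ContinuousOn f (Icc 0 b))
    (hfne : ∀ x ∈ Icc 0 b, f x ≠ 0) (k : ℕ) (hx : x ∈ Icc 0 b) :
    HasDerivWithinAt (reducedPower f k) (k * (reducedPower f⁻¹ (k - 1) x * (f x ^ 2)⁻¹))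
      (Icc 0 b) x := by
  cases k with
  | zero => rw [reducedPower_zero]; simpa using hasDerivWithinAt_const x (Icc 0 b) (1 : ℂ)
  | succ k =>
    have h_inv : ContinuousOn (fun s => reducedPower f⁻¹ k s * (f s ^ 2)⁻¹) (Icc 0 b) :=
      (continuousOn_reducedPower k (hf.inv₀ hfne) fun x hx => inv_ne_zero (hfne x hx)).mul
        ((hf.pow 2).inv₀ fun x hx => pow_ne_zero 2 (hfne x hx))
    have h := (hasDerivWithinAt_integral_of_continuousOn_Icc h_inv hx).const_mul (k + 1 : ℂ)
    simpa [← reducedPower_succ] using h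

/-- The derivative of the formal power `φₖ` of `f`, where `f'` is the derivative of `f`. -/
def formalPowerDeriv (f f' : ℝ → ℂ) (k : ℕ) (x : ℝ) : ℂ :=
  f' x * reducedPower f k x + k * reducedPower f⁻¹ (k - 1) x * (f x)⁻¹

theorem hasDerivWithinAt_formalPower {b x : ℝ} {f f' : ℝ → ℂ}
    (hf : ∀ x ∈ Icc 0 b, HasDerivWithinAt f (f' x) (Icc 0 b) x) (hfne : ∀ x ∈ Icc 0 b, f x ≠ 0)
    (k : ℕ) (hx : x ∈ Icc 0 b) :
    HasDerivWithinAt (formalPower f k) (formalPowerDeriv f f' k x) (Icc 0 b) x := by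
  have hc : ContinuousOn f (Icc 0 b) := fun x hx => (hf x hx).continuousWithinAt
  refine (((hf x hx).mul (hasDerivWithinAt_reducedPower hc hfne k hx)).congr_deriv ?_).congr_of_mem
    (fun x _ => formalPower_eq_mul_reducedPower f k x) hx
  have := hfne x hx
  rw [formalPowerDeriv]
  field_simp

theorem hasDerivWithinAt_formalPowerDeriv {b x : ℝ} {q f f' : ℝ → ℂ}
    (hf : ∀ x ∈ Icc 0 b, HasDerivWithinAt f (f' x) (Icc 0 b) x) (hfne : ∀ x ∈ Icc 0 b, f x ≠ 0)
    (hf' : ∀ x ∈ Icc 0 b, HasDerivWithinAt f' (q x * f x) (Icc 0 b) x) (k : ℕ)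
    (hx : x ∈ Icc 0 b) :
    HasDerivWithinAt (formalPowerDeriv f f' k)
      (q x * formalPower f k x + k * (k - 1 : ℕ) * formalPower f (k - 1 - 1) x) (Icc 0 b) x := by
  have hc : ContinuousOn f (Icc 0 b) := fun x hx => (hf x hx).continuousWithinAt
  have h_inv := hasDerivWithinAt_reducedPower (hc.inv₀ hfne) (fun x hx => inv_ne_zero (hfne x hx))
    (k - 1) hx
  have h := ((hf' x hx).mul (hasDerivWithinAt_reducedPower hc hfne k hx)).add
    ((h_inv.const_mul (k : ℂ)).mul ((hf x hx).inv (hfne x hx)))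
  refine h.congr_deriv ?_
  have := hfne x hx
  simp only [formalPower_eq_mul_reducedPower, inv_inv, Pi.inv_apply]
  field_simp
  ring

end FormalPowers

section TransmutedSolutions

variable {b : ℝ} {Q : ℝ → ℂ} {H Hu Hv : ℝ → ℝ → ℂ}

theorem formalPower_eq_transmute_pow {f f' : ℝ → ℂ} (hQ : Continuous Q)
    (hH : IsGoursatKernel Q H Hu Hv)
    (hf : ∀ x ∈ Icc 0 b, HasDerivWithinAt f (f' x) (Icc 0 b) x)
    (hf' : ∀ x ∈ Icc 0 b, HasDerivWithinAt f' (Q x * f x) (Icc 0 b) x)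
    (hf0 : f 0 = 1) (hf'0 : f' 0 = 0) (hfne : ∀ x ∈ Icc 0 b, f x ≠ 0) (k : ℕ) :
    EqOn (formalPower f k) (transmute H fun t => (t : ℂ) ^ k) (Icc 0 b) := by
  induction k using Nat.strong_induction_on with | _ k ih
  have h_pow (m : ℕ) (t : ℝ) :
      HasDerivAt (fun t : ℝ => (t : ℂ) ^ m) (m * (t : ℂ) ^ (m - 1)) t := by
    simpa using (hasDerivAt_pow m (t : ℂ)).comp_ofReal
  have h_pow' (t : ℝ) : HasDerivAt (fun t : ℝ => (k : ℂ) * (t : ℂ) ^ (k - 1))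
      (k * (k - 1 : ℕ) * (t : ℂ) ^ (k - 1 - 1)) t :=
    ((h_pow (k - 1) t).const_mul (k : ℂ)).congr_deriv (mul_assoc _ _ _).symm
  refine eqOn_of_hasDerivWithinAt_smul_add hQ.continuousOn
    (fun x hx => hasDerivWithinAt_formalPower hf hfne k hx)
    (fun x hx => hasDerivWithinAt_formalPowerDeriv hf hfne hf' k hx)
    (fun x _ => (hH.hasDerivAt_transmute (h_pow k) (by fun_prop) x).hasDerivWithinAt)
    (fun x hx => ((hH.hasDerivAt_transmuteDeriv hQ (h_pow k) h_pow' (by fun_prop)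
      x).congr_deriv ?_).hasDerivWithinAt) ?_ ?_
  · rw [transmute_const_mul, smul_eq_mul]
    rcases k.eq_zero_or_pos with rfl | hk
    · simp
    · rw [ih (k - 1 - 1) (by omega) hx]
  · simp [formalPower_eq_mul_reducedPower, hf0, reducedPower_apply_zero]
  · simp [formalPowerDeriv, hf0, hf'0, reducedPower_apply_zero, hH.transmuteDeriv_zero]

theorem eqOn_transmute_cexp {w : ℂ} {y y' : ℝ → ℂ} (hQ : Continuous Q)
    (hH : IsGoursatKernel Q H Hu Hv)
    (hy : ∀ x ∈ Icc 0 b, HasDerivWithinAt y (y' x) (Icc 0 b) x)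
    (hy' : ∀ x ∈ Icc 0 b, HasDerivWithinAt y' (Q x * y x - w ^ 2 * y x) (Icc 0 b) x)
    (hy0 : y 0 = 1) (hy'0 : y' 0 = I * w) :
    EqOn y (transmute H fun t => cexp (I * w * t)) (Icc 0 b) := by
  have h_exp (t : ℝ) :
      HasDerivAt (fun t : ℝ => cexp (I * w * t)) (I * w * cexp (I * w * t)) t := by
    simpa [mul_comm] using ((hasDerivAt_id (t : ℂ)).const_mul (I * w)).cexp.comp_ofReal
  have h_exp' (t : ℝ) :
      HasDerivAt (fun t : ℝ => I * w * cexp (I * w * t)) (-w ^ 2 * cexp (I * w * t)) t :=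
    ((h_exp t).const_mul _).congr_deriv (by linear_combination w ^ 2 * cexp (I * w * t) * I_sq)
  refine eqOn_of_hasDerivWithinAt_smul_add (c := fun x => Q x - w ^ 2) (r := 0) (by fun_prop) hy
    (fun x hx => (hy' x hx).congr_deriv (by simp [sub_mul]))
    (fun x _ => (hH.hasDerivAt_transmute h_exp (by fun_prop) x).hasDerivWithinAt)
    (fun x _ => ((hH.hasDerivAt_transmuteDeriv hQ h_exp h_exp' (by fun_prop)
      x).congr_deriv ?_).hasDerivWithinAt) ?_ ?_
  · rw [transmute_const_mul, smul_eq_mul, Pi.zero_apply]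
    ring
  · simp [hy0]
  · simp [hy'0, hH.transmuteDeriv_zero]

theorem betaCoef_eq_legendreCoeff {f g : ℝ → ℂ} {x : ℝ} (hx : x ≠ 0) (hg : Continuous g)
    (h : ∀ k, formalPower f k x = (x : ℂ) ^ k + ∫ s in (-1 : ℝ)..1, g s * ((x * s : ℝ) : ℂ) ^ k)
    (n : ℕ) : betaCoef f n x = legendreCoeff g n := by
  have hx' : (x : ℂ) ≠ 0 := by exact_mod_cast hx
  have h_eval (t : ℝ) : (((legendreP n).eval t : ℝ) : ℂ) =
      ∑ k ∈ Finset.range (n + 1), ((legendreP n).coeff k : ℂ) * (t : ℂ) ^ k := by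
    rw [Polynomial.eval_eq_sum_range,
      Polynomial.natDegree_eq_of_degree_eq_some (degree_legendreP n)]
    push_cast
    rfl
  have h_term (k : ℕ) : ((legendreP n).coeff k : ℂ) * formalPower f k x / (x : ℂ) ^ k =
      ((legendreP n).coeff k : ℂ) * ((1 : ℝ) : ℂ) ^ k +
        ∫ s in (-1 : ℝ)..1, ((legendreP n).coeff k : ℂ) * (s : ℂ) ^ k * g s := by
    simp only [h k, ofReal_mul, mul_pow, mul_left_comm (g _) ((x : ℂ) ^ k), mul_assoc,
      intervalIntegral.integral_const_mul, mul_comm (g _)]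
    field_simp
    simp
  rw [betaCoef, legendreCoeff, Finset.sum_congr rfl fun k _ => h_term k, Finset.sum_add_distrib,
    ← h_eval, eval_one_legendreP, ← intervalIntegral.integral_finsetSum fun k _ => by
      apply Continuous.intervalIntegrable; fun_prop]
  simp [h_eval, Finset.sum_mul]

end TransmutedSolutions

section TruncationError

theorem integral_exp_mul_le {a c : ℝ} (hc : 0 < c) (hac : |a| ≤ c) :
    ∫ s in (-1 : ℝ)..1, Real.exp (a * s) ≤ 2 * (Real.sinh c / c) := by
  have h_int (a : ℝ) : IntervalIntegrable (fun s => Real.exp (a * s)) volume (-1) 1 := by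
    apply Continuous.intervalIntegrable; fun_prop
  have h_neg : ∫ s in (-1 : ℝ)..1, Real.exp (-a * s) = ∫ s in (-1 : ℝ)..1, Real.exp (a * s) := by
    simpa using intervalIntegral.integral_comp_neg (a := -1) (b := 1) fun s => Real.exp (a * s)
  calc ∫ s in (-1 : ℝ)..1, Real.exp (a * s)
      = ∫ s in (-1 : ℝ)..1, Real.cosh (a * s) := by
        simp only [Real.cosh_eq, ← neg_mul]
        rw [intervalIntegral.integral_div, intervalIntegral.integral_add (h_int a) (h_int (-a)),
          h_neg, add_self_div_two]
    _ ≤ ∫ s in (-1 : ℝ)..1, Real.cosh (c * s) := by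
        refine intervalIntegral.integral_mono_on (by norm_num)
          (by apply Continuous.intervalIntegrable; fun_prop)
          (by apply Continuous.intervalIntegrable; fun_prop) fun s _ => ?_
        rw [Real.cosh_le_cosh, abs_mul, abs_mul, abs_of_pos hc]
        gcongr
    _ = 2 * (Real.sinh c / c) := by
        rw [intervalIntegral.integral_comp_mul_left _ hc.ne',
          intervalIntegral.integral_eq_sub_of_hasDerivAt (fun s _ => Real.hasDerivAt_sinh s)
            (Real.continuous_cosh.intervalIntegrable _ _)]
        simp only [mul_neg, mul_one, Real.sinh_neg, smul_eq_mul]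
        ring

theorem norm_integral_mul_cexp_le {R : ℝ → ℂ} {z : ℂ} {η c : ℝ}
    (hR : ∀ s ∈ Icc (-1 : ℝ) 1, ‖R s‖ ≤ η) (hc : 0 < c) (hz : |z.re| ≤ c) :
    ‖∫ s in (-1 : ℝ)..1, R s * cexp (z * s)‖ ≤ η * (2 * (Real.sinh c / c)) := by
  have hη : 0 ≤ η := (norm_nonneg (R 0)).trans (hR 0 (by norm_num))
  calc ‖∫ s in (-1 : ℝ)..1, R s * cexp (z * s)‖
      ≤ ∫ s in (-1 : ℝ)..1, η * Real.exp (z.re * s) := by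
        refine intervalIntegral.norm_integral_le_of_norm_le (by norm_num)
          (.of_forall fun s hs => ?_) (by apply Continuous.intervalIntegrable; fun_prop)
        rw [norm_mul, Complex.norm_exp, re_mul_ofReal]
        exact mul_le_mul_of_nonneg_right (hR s (Ioc_subset_Icc_self hs)) (Real.exp_pos _).le
    _ ≤ η * (2 * (Real.sinh c / c)) := by
        rw [intervalIntegral.integral_const_mul]
        exact mul_le_mul_of_nonneg_left (integral_exp_mul_le hc hz) hη

theorem integral_sub_legendreSum_mul {g e : ℝ → ℂ} (hg : Continuous g) (he : Continuous e)
    (N : ℕ) :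
    ∫ s in (-1 : ℝ)..1, (g s - legendreSum g N s) * e s =
      (∫ s in (-1 : ℝ)..1, g s * e s) - ∑ n ∈ Finset.range N, legendreCoeff g n *
        ∫ s in (-1 : ℝ)..1, (((legendreP n).eval s : ℝ) : ℂ) * e s := by
  simp only [← intervalIntegral.integral_const_mul]
  rw [← intervalIntegral.integral_finsetSum fun n _ => by
      apply Continuous.intervalIntegrable; fun_prop,
    ← intervalIntegral.integral_sub (by apply Continuous.intervalIntegrable; fun_prop)
      (by apply Continuous.intervalIntegrable; fun_prop)]
  congr 1; ext s
  simp only [legendreSum, sub_mul, Finset.sum_mul, real_smul]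
  congr! 2
  ring

/-- The truncated Neumann series of Bessel functions `u_N(w, x)`; here `N` counts the terms. -/
def nsbfApprox (f : ℝ → ℂ) (w : ℂ) (N : ℕ) (x : ℝ) : ℂ :=
  cexp (I * w * x) + ∑ n ∈ Finset.range N, betaCoef f n x *
    ∫ s in (-1 : ℝ)..1, (((legendreP n).eval s : ℝ) : ℂ) * cexp (I * w * x * s)

theorem sub_nsbfApprox_eq_integral {b x : ℝ} {w : ℂ} {Q f f' y y' : ℝ → ℂ}
    {H Hu Hv : ℝ → ℝ → ℂ} (hQ : Continuous Q) (hH : IsGoursatKernel Q H Hu Hv)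
    (hf : ∀ x ∈ Icc 0 b, HasDerivWithinAt f (f' x) (Icc 0 b) x)
    (hf' : ∀ x ∈ Icc 0 b, HasDerivWithinAt f' (Q x * f x) (Icc 0 b) x)
    (hf0 : f 0 = 1) (hf'0 : f' 0 = 0) (hfne : ∀ x ∈ Icc 0 b, f x ≠ 0)
    (hy : ∀ x ∈ Icc 0 b, HasDerivWithinAt y (y' x) (Icc 0 b) x)
    (hy' : ∀ x ∈ Icc 0 b, HasDerivWithinAt y' (Q x * y x - w ^ 2 * y x) (Icc 0 b) x)
    (hy0 : y 0 = 1) (hy'0 : y' 0 = I * w) (N : ℕ) (hx : x ∈ Ioc 0 b) :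
    y x - nsbfApprox f w N x = ∫ s in (-1 : ℝ)..1,
      (kernelSlice H x s - legendreSum (kernelSlice H x) N s) * cexp (I * w * x * s) := by
  have hxI := Ioc_subset_Icc_self hx
  obtain ⟨k, -, hk⟩ := hH.exists_hasDerivAt_kernelSlice x
  have hc : Continuous (kernelSlice H x) :=
    continuous_iff_continuousAt.2 fun s => (hk s).continuousAt
  have h_beta : ∀ n, betaCoef f n x = legendreCoeff (kernelSlice H x) n :=
    betaCoef_eq_legendreCoeff hx.1.ne' hc fun k => by
      rw [formalPower_eq_transmute_pow hQ hH hf hf' hf0 hf'0 hfne k hxI,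
        transmute_eq_add_integral_kernelSlice]
  rw [eqOn_transmute_cexp hQ hH hy hy' hy0 hy'0 hxI, transmute_eq_add_integral_kernelSlice,
    nsbfApprox, integral_sub_legendreSum_mul hc (by fun_prop)]
  simp only [h_beta, ofReal_mul, ← mul_assoc, add_sub_add_left_eq_sub]

theorem exists_tendsto_zero_forall_norm_sub_legendreSum_le {g g' : ℝ → ℂ}
    (hg : ∀ s, HasDerivAt g (g' s) s) (hg' : Continuous g') :
    ∃ η : ℕ → ℝ, (∀ N, 0 ≤ η N) ∧ Tendsto η atTop (𝓝 0) ∧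
      ∀ N, ∀ s ∈ Icc (-1 : ℝ) 1, ‖g s - legendreSum g N s‖ ≤ η N := by
  simp only [← dist_eq_norm]
  exact exists_tendsto_zero_forall_dist_le isCompact_Icc
    (fun N => (continuous_legendreSum g N).continuousOn)
    (fun s _ => (hg s).continuousAt.continuousWithinAt)
    (tendstoUniformlyOn_legendreSum (fun s _ => (hg s).hasDerivWithinAt) hg'.continuousOn)

theorem NSBF_truncation_error_strip_general {b : ℝ} (hb : 0 < b) {q f f' : ℝ → ℂ}
    (hq : ContinuousOn q (Icc 0 b))
    (hf : ∀ x ∈ Icc 0 b, HasDerivWithinAt f (f' x) (Icc 0 b) x)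
    (hf' : ∀ x ∈ Icc 0 b, HasDerivWithinAt f' (q x * f x) (Icc 0 b) x)
    (hf0 : f 0 = 1) (hf'0 : f' 0 = 0) (hfne : ∀ x ∈ Icc 0 b, f x ≠ 0) :
    ∃ ε : ℕ → ℝ → ℝ, (∀ N, ∀ x ∈ Ioc 0 b, 0 ≤ ε N x) ∧
      (∀ x ∈ Ioc 0 b, Tendsto (fun N => ε N x) atTop (𝓝 0)) ∧
      ∀ C : ℝ, 0 < C → ∀ w : ℂ, |w.im| ≤ C → ∀ y y' : ℝ → ℂ,
        (∀ x ∈ Icc 0 b, HasDerivWithinAt y (y' x) (Icc 0 b) x) →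
        (∀ x ∈ Icc 0 b, HasDerivWithinAt y' (q x * y x - w ^ 2 * y x) (Icc 0 b) x) →
        y 0 = 1 → y' 0 = I * w →
        ∀ N, ∀ x ∈ Ioc 0 b, ‖y x - nsbfApprox f w N x‖ ≤ ε N x * Real.sinh (C * x) / C := by
  obtain ⟨Q, hQ, hqQ⟩ : ∃ Q : ℝ → ℂ, Continuous Q ∧ ∀ x ∈ Icc 0 b, q x = Q x :=
    ⟨_, hq.domRestrict.Icc_extend' (h := hb.le), fun x hx => by simp [IccExtend_of_mem hb.le _ hx]⟩
  obtain ⟨H, Hu, Hv, hH⟩ := exists_isGoursatKernel hQ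
  have h_slice (x : ℝ) :=
    let ⟨_, hk, hHk⟩ := hH.exists_hasDerivAt_kernelSlice x
    exists_tendsto_zero_forall_norm_sub_legendreSum_le hHk hk
  choose η hη₀ hη_lim hη using h_slice
  refine ⟨fun N x => 2 / x * η x N, fun N x hx => mul_nonneg (div_nonneg zero_le_two hx.1.le)
    (hη₀ x N), fun x _ => by simpa using (hη_lim x).const_mul (2 / x), ?_⟩
  intro C hC w hw y y' hy hy' hy0 hy'0 N x hx
  have hx₀ : 0 < x := hx.1
  rw [sub_nsbfApprox_eq_integral hQ hH hf (fun x hx => hqQ x hx ▸ hf' x hx) hf0 hf'0 hfne hy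
    (fun x hx => hqQ x hx ▸ hy' x hx) hy0 hy'0 N hx]
  refine (norm_integral_mul_cexp_le (hη x N) (mul_pos hC hx₀) ?_).trans_eq (by field_simp)
  simpa [abs_mul, abs_of_pos hx₀] using mul_le_mul_of_nonneg_right hw hx₀.le

end TruncationError

/-- error bound for the truncated NSBF representation in a strip |Im ω| ≤ C. -/
theorem NSBF_truncation_error_strip
    (b : ℝ) (hb : 0 < b) (q : ℝ → ℂ) (hq : ContinuousOn q (Set.Icc (-b) b))
    (f f' : ℝ → ℂ)
    (hf : ∀ x ∈ Set.Icc (-b) b, HasDerivAt f (f' x) x)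
    (hf' : ∀ x ∈ Set.Icc (-b) b, HasDerivAt f' (q x * f x) x)
    (hf0 : f 0 = 1) (hf'0 : f' 0 = 0)
    (hfne : ∀ x ∈ Set.Icc (-b) b, f x ≠ 0) :
    ∃ ε : ℕ → ℝ → ℝ,
      (∀ N : ℕ, ∀ x ∈ Set.Ioc (0:ℝ) b, 0 ≤ ε N x) ∧
      (∀ x ∈ Set.Ioc (0:ℝ) b, Tendsto (fun N : ℕ => ε N x) atTop (𝓝 0)) ∧
      ∀ (C : ℝ), 0 < C → ∀ (w : ℂ), w ≠ 0 → |w.im| ≤ C →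
        ∀ (y y' : ℝ → ℂ),
          (∀ x ∈ Set.Icc (-b) b, HasDerivAt y (y' x) x) →
          (∀ x ∈ Set.Icc (-b) b, HasDerivAt y' (q x * y x - w ^ 2 * y x) x) →
          y 0 = 1 → y' 0 = Complex.I * w →
          ∀ (N : ℕ), ∀ x ∈ Set.Ioc (0:ℝ) b,
            ‖y x - (fun (w : ℂ) (N : ℕ) (x : ℝ) => Complex.exp (Complex.I * w * x) +
        ∑ n ∈ Finset.range N, betaCoef f n x *
          ∫ s in (-1:ℝ)..1, (((legendreP n).eval s : ℝ) : ℂ) * Complex.exp (Complex.I * w * x * s)) w N x‖ ≤ ε N x * Real.sinh (C * x) / C := by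
  have h_sub : Icc 0 b ⊆ Icc (-b) b := Icc_subset_Icc_left (neg_nonpos.2 hb.le)
  obtain ⟨ε, hε₀, hε_lim, hε⟩ := NSBF_truncation_error_strip_general hb (hq.mono h_sub)
    (fun x hx => (hf x (h_sub hx)).hasDerivWithinAt)
    (fun x hx => (hf' x (h_sub hx)).hasDerivWithinAt) hf0 hf'0 fun x hx => hfne x (h_sub hx)
  exact ⟨ε, hε₀, hε_lim, fun C hC w _ hw y y' hy hy' => hε C hC w hw y y'
    (fun x hx => (hy x (h_sub hx)).hasDerivWithinAt)
    fun x hx => (hy' x (h_sub hx)).hasDerivWithinAt⟩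

end
end

section
/- Let b > 0, let q : ℝ → ℂ be continuous on [−b,b], let f solve f'' − q f = 0 on [−b,b] with f(0) = 1, f'(0) = 0, and assume f(x) ≠ 0 on [−b,b]. For ω ∈ ℝ let u(ω,·) be the solution of y'' − q(x)y = −ω² y on [−b,b] with y(0) = 1, y'(0) = iω. Then for every ω ∈ ℝ and every x ∈ [−b,b], the series Σ_{n=0}^{∞} a_n(x)·(iω)ⁿ/(1+iω)^{n+1} converges and u(ω,x) = e^{iωx}·(1 + Σ_{n=0}^{∞} a_n(x)·(iω)ⁿ/(1+iω)^{n+1}), where a_n(x) = Σ_{j=0}^{n} (−1)^j (φ_j(x) − x^j) Σ_{k=j}^{n} (−1)^k n!/((n−k)! k! (k−j)! j!) x^{k−j}. -/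
open MeasureTheory Set Filter Finset Complex Topology

noncomputable section

/-- aₙ(x) = Σⱼ (−1)ʲ (φⱼ(x) − xʲ) Σₖ (−1)ᵏ n!/((n−k)!k!(k−j)!j!) x^{k−j}. -/
def aCoef (f : ℝ → ℂ) (n : ℕ) (x : ℝ) : ℂ :=
  ∑ j ∈ Finset.range (n + 1), (-1 : ℂ) ^ j * (formalPower f j x - (x : ℂ) ^ j) *
    ∑ k ∈ Finset.Icc j n, (-1 : ℂ) ^ k * (n.factorial : ℂ) /
      (((n - k).factorial : ℂ) * (k.factorial : ℂ) * ((k - j).factorial : ℂ) * (j.factorial : ℂ)) *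
      (x : ℂ) ^ (k - j)

/-!
Put `z = iω`. The quotient `v = y / f` and the Wronskian `w = f y' - f' y` satisfy the first-order
system `v' = w f⁻²`, `w' = z² v f²`; expanding in iterated integrals of `f⁻²` and `f²`, as in
Taylor's theorem, gives `y(x) = ∑ φₖ(x) zᵏ / k!`. Multiplying `y(x) - exp (z x)` by `exp (-z x)`
yields an entire series `∑ cₖ zᵏ` in `z`, and `aₙ = ∑ₖ (n choose k) cₖ`. As `|z| < |1 + z|`, each
`zᵏ` is the sum over `n` of `(n choose k) zⁿ / (1 + z)ⁿ⁺¹`, and exchanging the two sums turns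
`∑ cₖ zᵏ` into the Laguerre series.
-/

section GeneralizedTaylor

variable {𝕜 : Type*} [RCLike 𝕜]

theorem integral_eq_sub_of_hasDerivWithinAt {E : Type*} [NormedAddCommGroup E] [NormedSpace ℝ E]
    [CompleteSpace E] {g g' : ℝ → E} {a x : ℝ}
    (hg : ∀ t ∈ uIcc a x, HasDerivWithinAt g (g' t) (uIcc a x) t)
    (hint : IntervalIntegrable g' volume a x) :
    ∫ s in a..x, g' s = g x - g a := by
  refine intervalIntegral.integral_eq_sub_of_hasDeriv_right
    (fun t ht => (hg t ht).continuousWithinAt) (fun t ht => ?_) hint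
  have hnhds : uIcc a x ∈ 𝓝 t := Icc_mem_nhds ht.1 ht.2
  exact ((hg t (mem_of_mem_nhds hnhds)).hasDerivAt hnhds).hasDerivWithinAt

theorem norm_integral_mul_le_pow_div_factorial {g p : ℝ → 𝕜} {a x K M : ℝ} {n : ℕ}
    (hp : ∀ s ∈ uIcc a x, ‖p s‖ ≤ M)
    (hg : ∀ s ∈ uIcc a x, ‖g s‖ ≤ K * ((M * |s - a|) ^ n / n.factorial)) :
    ‖∫ s in a..x, g s * p s‖ ≤ K * ((M * |x - a|) ^ (n + 1) / (n + 1).factorial) := by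
  have hcont : Continuous fun s : ℝ => K * M ^ (n + 1) / n.factorial * |s - a| ^ n := by fun_prop
  have hle : ∀ s ∈ uIoc a x, ‖g s * p s‖ ≤ K * M ^ (n + 1) / n.factorial * |s - a| ^ n := by
    intro s hs
    have hs' := uIoc_subset_uIcc hs
    calc ‖g s * p s‖ ≤ K * ((M * |s - a|) ^ n / n.factorial) * M := by
          rw [norm_mul]
          exact mul_le_mul (hg s hs') (hp s hs') (norm_nonneg _) ((norm_nonneg _).trans (hg s hs'))
      _ = _ := by ring
  calc ‖∫ s in a..x, g s * p s‖
      = ‖∫ s in uIoc a x, g s * p s‖ := intervalIntegral.norm_intervalIntegral_eq _ _ _ _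
    _ ≤ ∫ s in uIoc a x, K * M ^ (n + 1) / n.factorial * |s - a| ^ n :=
        norm_integral_le_of_norm_le (hcont.intervalIntegrable a x).def'
          ((ae_restrict_iff' measurableSet_uIoc).2 (ae_of_all _ hle))
    _ = K * ((M * |x - a|) ^ (n + 1) / (n + 1).factorial) := by
        rw [integral_const_mul, integral_pow_abs_sub_uIoc, Nat.factorial_succ]
        push_cast
        field_simp
        rw [mul_pow, mul_assoc]

/-- The iterated integral `∫_a^x p₀(s₀) ∫_a^{s₀} p₁(s₁) ⋯ ∫_a^{s_{n-2}} p_{n-1}(s_{n-1})`, the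
analogue of `(x - a) ^ n / n!` for the weights `p`; the weight `p 0` belongs to the outermost
integral. -/
def iteratedIntegral (a : ℝ) : (ℕ → ℝ → 𝕜) → ℕ → ℝ → 𝕜
  | _, 0 => fun _ => 1
  | p, n + 1 => fun x => ∫ s in a..x, iteratedIntegral a (fun k => p (k + 1)) n s * p 0 s

variable {p : ℕ → ℝ → 𝕜} {a x M : ℝ}

theorem continuousOn_iteratedIntegral (hp : ∀ n, ContinuousOn (p n) (uIcc a x)) (n : ℕ) :
    ContinuousOn (iteratedIntegral a p n) (uIcc a x) := by
  induction n generalizing p with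
  | zero => exact continuousOn_const
  | succ n ih =>
    exact intervalIntegral.continuousOn_primitive_interval'
      ((ih fun k => hp (k + 1)).mul (hp 0)).intervalIntegrable left_mem_uIcc

theorem norm_iteratedIntegral_le (hM : ∀ n, ∀ t ∈ uIcc a x, ‖p n t‖ ≤ M) (n : ℕ) :
    ‖iteratedIntegral a p n x‖ ≤ (M * |x - a|) ^ n / n.factorial := by
  induction n generalizing p x with
  | zero => simp [iteratedIntegral]
  | succ n ih =>
    have hstep := norm_integral_mul_le_pow_div_factorial (K := 1) (hM 0) fun s hs =>
      (ih fun k t ht => hM (k + 1) t (uIcc_subset_uIcc_left hs ht)).trans_eq (one_mul _).symm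
    rwa [one_mul] at hstep

variable {u : ℕ → ℝ → 𝕜}

theorem sub_sum_iteratedIntegral_succ (hp : ∀ n, ContinuousOn (p n) (uIcc a x))
    (hu : ∀ n, ∀ t ∈ uIcc a x, HasDerivWithinAt (u n) (u (n + 1) t * p n t) (uIcc a x) t)
    (n : ℕ) :
    u 0 x - ∑ k ∈ Finset.range (n + 1), u k a * iteratedIntegral a p k x =
      ∫ s in a..x, (u 1 s - ∑ k ∈ Finset.range n,
        u (k + 1) a * iteratedIntegral a (fun j => p (j + 1)) k s) * p 0 s := by
  have hu₁ : ContinuousOn (u 1) (uIcc a x) := fun t ht => (hu 1 t ht).continuousWithinAt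
  have hint : IntervalIntegrable (fun s => u 1 s * p 0 s) volume a x :=
    (hu₁.mul (hp 0)).intervalIntegrable
  have hterm : ∀ k ∈ Finset.range n, IntervalIntegrable (fun s =>
      u (k + 1) a * iteratedIntegral a (fun j => p (j + 1)) k s * p 0 s) volume a x := fun k _ =>
    ((continuousOn_const.mul (continuousOn_iteratedIntegral (fun j => hp (j + 1)) k)).mul
      (hp 0)).intervalIntegrable
  simp_rw [sub_mul, Finset.sum_mul]
  rw [intervalIntegral.integral_sub hint
      (by simpa only [Finset.sum_fn] using IntervalIntegrable.sum _ hterm),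
    intervalIntegral.integral_finsetSum hterm, integral_eq_sub_of_hasDerivWithinAt (hu 0) hint,
    Finset.sum_range_succ']
  simp_rw [mul_assoc, intervalIntegral.integral_const_mul, iteratedIntegral]
  ring

theorem norm_sub_sum_iteratedIntegral_le {K : ℝ} {n : ℕ}
    (hp : ∀ n, ContinuousOn (p n) (uIcc a x)) (hM : ∀ n, ∀ t ∈ uIcc a x, ‖p n t‖ ≤ M)
    (hu : ∀ n, ∀ t ∈ uIcc a x, HasDerivWithinAt (u n) (u (n + 1) t * p n t) (uIcc a x) t)
    (hK : ∀ t ∈ uIcc a x, ‖u n t‖ ≤ K) :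
    ‖u 0 x - ∑ k ∈ Finset.range n, u k a * iteratedIntegral a p k x‖ ≤
      K * ((M * |x - a|) ^ n / n.factorial) := by
  induction n generalizing u p x with
  | zero => simpa using hK x right_mem_uIcc
  | succ n ih =>
    rw [sub_sum_iteratedIntegral_succ hp hu]
    refine norm_integral_mul_le_pow_div_factorial (hM 0) fun s hs => ?_
    have hsub : uIcc a s ⊆ uIcc a x := uIcc_subset_uIcc_left hs
    exact ih (u := fun k => u (k + 1)) (fun k => (hp (k + 1)).mono hsub)
      (fun k t ht => hM (k + 1) t (hsub ht))
      (fun k t ht => (hu (k + 1) t (hsub ht)).mono hsub) fun t ht => hK t (hsub ht)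

theorem hasSum_iteratedIntegral {K R : ℝ}
    (hp : ∀ n, ContinuousOn (p n) (uIcc a x)) (hM : ∀ n, ∀ t ∈ uIcc a x, ‖p n t‖ ≤ M)
    (hu : ∀ n, ∀ t ∈ uIcc a x, HasDerivWithinAt (u n) (u (n + 1) t * p n t) (uIcc a x) t)
    (hK : ∀ n, ∀ t ∈ uIcc a x, ‖u n t‖ ≤ K * R ^ n) :
    HasSum (fun k => u k a * iteratedIntegral a p k x) (u 0 x) := by
  have hbound : ∀ n : ℕ, K * R ^ n * ((M * |x - a|) ^ n / n.factorial) =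
      K * ((R * (M * |x - a|)) ^ n / n.factorial) := fun n => by ring
  have hmajorant := (Real.summable_pow_div_factorial (R * (M * |x - a|))).mul_left K
  have hsummable : Summable fun k => u k a * iteratedIntegral a p k x :=
    hmajorant.of_norm_bounded fun n => by
      rw [norm_mul, ← hbound]
      exact mul_le_mul (hK n a left_mem_uIcc) (norm_iteratedIntegral_le hM n) (norm_nonneg _)
        ((norm_nonneg _).trans (hK n a left_mem_uIcc))
  rw [hsummable.hasSum_iff_tendsto_nat, tendsto_iff_norm_sub_tendsto_zero]
  refine squeeze_zero (fun _ => norm_nonneg _) (fun n => ?_) hmajorant.tendsto_atTop_zero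
  rw [norm_sub_rev, ← hbound]
  exact norm_sub_sum_iteratedIntegral_le hp hM hu (hK n)

/-- The sequence `v, w, z² v, z² w, z⁴ v, …`. If `v' = w p₀` and `w' = z² v p₁`, each term has
the next one times `p₀` or `p₁` as its derivative. -/
def alternatingChain (z : 𝕜) (v w : ℝ → 𝕜) : ℕ → ℝ → 𝕜
  | 0 => v
  | 1 => w
  | n + 2 => fun t => z ^ 2 * alternatingChain z v w n t

variable {z : 𝕜} {v w : ℝ → 𝕜}

theorem hasDerivWithinAt_alternatingChain (hper : Function.Periodic p 2) {s : Set ℝ} {t : ℝ}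
    (hv : HasDerivWithinAt v (w t * p 0 t) s t)
    (hw : HasDerivWithinAt w (z ^ 2 * v t * p 1 t) s t) (n : ℕ) :
    HasDerivWithinAt (alternatingChain z v w n) (alternatingChain z v w (n + 1) t * p n t) s t := by
  induction n using Nat.twoStepInduction with
  | zero => exact hv
  | one => exact hw
  | more n ih _ =>
    rw [hper n]
    simpa only [alternatingChain, mul_assoc] using ih.const_mul (z ^ 2)

theorem alternatingChain_apply_eq_pow {t : ℝ} (hv : v t = 1) (hw : w t = z) (n : ℕ) :
    alternatingChain z v w n t = z ^ n := by
  induction n using Nat.twoStepInduction with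
  | zero => simpa only [alternatingChain, pow_zero] using hv
  | one => simpa only [alternatingChain, pow_one] using hw
  | more n ih _ => simp only [alternatingChain, ih]; ring

theorem norm_alternatingChain_le {K : ℝ} {t : ℝ} (hv : ‖v t‖ ≤ K) (hw : ‖w t‖ ≤ K) (n : ℕ) :
    ‖alternatingChain z v w n t‖ ≤ K * max 1 ‖z‖ ^ n := by
  have hK : 0 ≤ K := (norm_nonneg _).trans hv
  induction n using Nat.twoStepInduction with
  | zero => simpa only [alternatingChain, pow_zero, mul_one] using hv
  | one =>
    rw [pow_one]
    exact hw.trans (le_mul_of_one_le_right hK (le_max_left _ _))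
  | more n ih _ =>
    calc ‖z ^ 2 * alternatingChain z v w n t‖
        = ‖z‖ ^ 2 * ‖alternatingChain z v w n t‖ := by rw [norm_mul, norm_pow]
      _ ≤ max 1 ‖z‖ ^ 2 * (K * max 1 ‖z‖ ^ n) := by gcongr; exact le_max_right _ _
      _ = K * max 1 ‖z‖ ^ (n + 2) := by ring

theorem exists_norm_le_of_periodic_two (hper : Function.Periodic p 2)
    {s : Set ℝ} (hs : IsCompact s) (hp : ∀ n, ContinuousOn (p n) s) :
    ∃ M, ∀ n, ∀ t ∈ s, ‖p n t‖ ≤ M := by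
  obtain ⟨M₀, hM₀⟩ := hs.exists_bound_of_continuousOn (hp 0)
  obtain ⟨M₁, hM₁⟩ := hs.exists_bound_of_continuousOn (hp 1)
  refine ⟨max M₀ M₁, fun n t ht => ?_⟩
  rw [← hper.map_mod_nat n]
  rcases Nat.mod_two_eq_zero_or_one n with h | h <;> rw [h]
  exacts [le_max_of_le_left (hM₀ t ht), le_max_of_le_right (hM₁ t ht)]

theorem hasSum_pow_mul_iteratedIntegral (hper : Function.Periodic p 2)
    (hp : ∀ n, ContinuousOn (p n) (uIcc a x))
    (hv : ∀ t ∈ uIcc a x, HasDerivWithinAt v (w t * p 0 t) (uIcc a x) t)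
    (hw : ∀ t ∈ uIcc a x, HasDerivWithinAt w (z ^ 2 * v t * p 1 t) (uIcc a x) t)
    (hva : v a = 1) (hwa : w a = z) :
    HasSum (fun k => z ^ k * iteratedIntegral a p k x) (v x) := by
  obtain ⟨M, hM⟩ := exists_norm_le_of_periodic_two hper isCompact_uIcc hp
  obtain ⟨K₀, hK₀⟩ := isCompact_uIcc.exists_bound_of_continuousOn
    fun t ht => (hv t ht).continuousWithinAt
  obtain ⟨K₁, hK₁⟩ := isCompact_uIcc.exists_bound_of_continuousOn
    fun t ht => (hw t ht).continuousWithinAt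
  have hsum := hasSum_iteratedIntegral hp hM
    (fun n t ht => hasDerivWithinAt_alternatingChain hper (hv t ht) (hw t ht) n)
    fun n t ht => norm_alternatingChain_le (le_max_of_le_left (hK₀ t ht))
      (le_max_of_le_right (hK₁ t ht)) n
  simp only [alternatingChain_apply_eq_pow hva hwa] at hsum
  exact hsum

end GeneralizedTaylor

section FormalPowers

/-- The weights `f⁻², f², f⁻², …` whose iterated integrals are the formal powers divided by
`f` and the factorial. -/
def formalWeight (f : ℝ → ℂ) (k : ℕ) (s : ℝ) : ℂ := (f s ^ 2) ^ ((-1 : ℤ) ^ (k + 1))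

theorem formalWeight_zero (f : ℝ → ℂ) (s : ℝ) : formalWeight f 0 s = (f s ^ 2)⁻¹ := by
  simp [formalWeight]

theorem formalWeight_one (f : ℝ → ℂ) (s : ℝ) : formalWeight f 1 s = f s ^ 2 := by
  simp [formalWeight]

theorem formalWeight_periodic (f : ℝ → ℂ) : Function.Periodic (formalWeight f) 2 := fun k => by
  funext s
  simp only [formalWeight, pow_succ, mul_neg, mul_one, neg_neg]

theorem continuousOn_formalWeight {f : ℝ → ℂ} {s : Set ℝ} (hf : ContinuousOn f s)
    (hne : ∀ t ∈ s, f t ≠ 0) (k : ℕ) : ContinuousOn (formalWeight f k) s :=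
  (hf.pow 2).zpow₀ _ fun t ht => Or.inl (pow_ne_zero 2 (hne t ht))

theorem formalX_eq_factorial_mul (f : ℝ → ℂ) (n : ℕ) (x : ℝ) :
    formalX f n x =
      n.factorial * iteratedIntegral 0 (fun k s => (f s ^ 2) ^ ((-1 : ℤ) ^ (n + k))) n x := by
  induction n generalizing x with
  | zero => simp [formalX, iteratedIntegral]
  | succ n ih =>
    have hshift : ∀ k, (-1 : ℤ) ^ (n + 1 + (k + 1)) = (-1) ^ (n + k) := fun k => by ring
    simp only [formalX, iteratedIntegral, ih, hshift, add_zero, mul_assoc,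
      intervalIntegral.integral_const_mul, Nat.factorial_succ, Nat.cast_mul, Nat.cast_succ]

theorem formalXt_eq_factorial_mul (f : ℝ → ℂ) (n : ℕ) (x : ℝ) :
    formalXt f n x =
      n.factorial * iteratedIntegral 0 (fun k s => (f s ^ 2) ^ ((-1 : ℤ) ^ (n + k + 1))) n x := by
  induction n generalizing x with
  | zero => simp [formalXt, iteratedIntegral]
  | succ n ih =>
    have hshift : ∀ k, (-1 : ℤ) ^ (n + 1 + (k + 1) + 1) = (-1) ^ (n + k + 1) := fun k => by ring
    have houter : (-1 : ℤ) ^ (n + 1 + 0 + 1) = (-1) ^ n := by ring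
    simp only [formalXt, iteratedIntegral, ih, hshift, houter, mul_assoc,
      intervalIntegral.integral_const_mul, Nat.factorial_succ, Nat.cast_mul, Nat.cast_succ]

theorem formalPower_div_factorial (f : ℝ → ℂ) (n : ℕ) (x : ℝ) :
    formalPower f n x / n.factorial = f x * iteratedIntegral 0 (formalWeight f) n x := by
  have hn : (n.factorial : ℂ) ≠ 0 := by exact_mod_cast n.factorial_ne_zero
  rw [div_eq_iff hn]
  unfold formalPower formalWeight
  rcases n.even_or_odd with h | h
  · simp only [if_neg (Nat.not_odd_iff_even.2 h), formalXt_eq_factorial_mul, add_assoc, pow_add,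
      h.neg_one_pow, one_mul]
    ring
  · simp only [if_pos h, formalX_eq_factorial_mul, pow_add, h.neg_one_pow, pow_one, mul_comm]
    ring

theorem summable_norm_formalPower {f : ℝ → ℂ} {x : ℝ} (hf : ContinuousOn f (uIcc 0 x))
    (hne : ∀ t ∈ uIcc 0 x, f t ≠ 0) (r : ℂ) :
    Summable fun k => ‖formalPower f k x / k.factorial * r ^ k‖ := by
  obtain ⟨M, hM⟩ := exists_norm_le_of_periodic_two (formalWeight_periodic f) isCompact_uIcc
    (continuousOn_formalWeight hf hne)
  refine ((Real.summable_pow_div_factorial (M * |x - 0| * ‖r‖)).mul_left ‖f x‖).of_nonneg_of_le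
    (fun _ => norm_nonneg _) fun k => ?_
  calc ‖formalPower f k x / k.factorial * r ^ k‖
      = ‖f x‖ * ‖iteratedIntegral 0 (formalWeight f) k x‖ * ‖r‖ ^ k := by
        rw [formalPower_div_factorial, norm_mul, norm_mul, norm_pow]
    _ ≤ ‖f x‖ * ((M * |x - 0|) ^ k / k.factorial) * ‖r‖ ^ k := by
        gcongr
        exact norm_iteratedIntegral_le hM k
    _ = ‖f x‖ * ((M * |x - 0| * ‖r‖) ^ k / k.factorial) := by ring

theorem hasDerivWithinAt_wronskian {f f' y y' : ℝ → ℂ} {q z : ℂ} {s : Set ℝ} {t : ℝ}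
    (hf : HasDerivWithinAt f (f' t) s t) (hf' : HasDerivWithinAt f' (q * f t) s t)
    (hy : HasDerivWithinAt y (y' t) s t)
    (hy' : HasDerivWithinAt y' (q * y t + z * y t) s t) :
    HasDerivWithinAt (fun t => f t * y' t - f' t * y t) (z * (f t * y t)) s t := by
  convert! (hf.mul hy').sub (hf'.mul hy) using 1
  ring

theorem hasSum_formalPower {q f f' y y' : ℝ → ℂ} {x : ℝ} {z : ℂ}
    (hf : ∀ t ∈ uIcc 0 x, HasDerivWithinAt f (f' t) (uIcc 0 x) t)
    (hf' : ∀ t ∈ uIcc 0 x, HasDerivWithinAt f' (q t * f t) (uIcc 0 x) t)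
    (hf0 : f 0 = 1) (hf'0 : f' 0 = 0) (hne : ∀ t ∈ uIcc 0 x, f t ≠ 0)
    (hy : ∀ t ∈ uIcc 0 x, HasDerivWithinAt y (y' t) (uIcc 0 x) t)
    (hy' : ∀ t ∈ uIcc 0 x, HasDerivWithinAt y' (q t * y t + z ^ 2 * y t) (uIcc 0 x) t)
    (hy0 : y 0 = 1) (hy'0 : y' 0 = z) :
    HasSum (fun k => formalPower f k x / k.factorial * z ^ k) (y x) := by
  have hfc : ContinuousOn f (uIcc 0 x) := fun t ht => (hf t ht).continuousWithinAt
  have hquot : ∀ t ∈ uIcc 0 x, HasDerivWithinAt (fun t => y t / f t)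
      ((f t * y' t - f' t * y t) * formalWeight f 0 t) (uIcc 0 x) t := fun t ht => by
    convert! (hy t ht).div (hf t ht) (hne t ht) using 1
    rw [formalWeight_zero, div_eq_mul_inv]
    ring
  have hwronskian : ∀ t ∈ uIcc 0 x, HasDerivWithinAt (fun t => f t * y' t - f' t * y t)
      (z ^ 2 * (y t / f t) * formalWeight f 1 t) (uIcc 0 x) t := fun t ht => by
    convert! hasDerivWithinAt_wronskian (hf t ht) (hf' t ht) (hy t ht) (hy' t ht) using 1
    have hft := hne t ht
    rw [formalWeight_one]
    field_simp
  have hsum := hasSum_pow_mul_iteratedIntegral (formalWeight_periodic f)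
    (continuousOn_formalWeight hfc hne) hquot hwronskian (by simp [hf0, hy0])
    (by simp [hf0, hf'0, hy'0])
  convert! hsum.mul_left (f x) using 1
  · funext k
    rw [formalPower_div_factorial]
    ring
  · exact (mul_div_cancel₀ _ (hne x right_mem_uIcc)).symm

end FormalPowers

section BinomialTransform

variable {𝕜 : Type*} [NormedField 𝕜]

theorem hasSum_choose_mul_pow_div_pow {z w : 𝕜} (h : ‖z‖ < ‖w‖) (k : ℕ) :
    HasSum (fun m => ((m + k).choose k : 𝕜) * (z ^ (m + k) / w ^ (m + k + 1)))
      (z ^ k / (w - z) ^ (k + 1)) := by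
  have hw : w ≠ 0 := norm_pos_iff.1 ((norm_nonneg z).trans_lt h)
  have hwz : w - z ≠ 0 := sub_ne_zero.2 fun hwz => h.ne (by rw [hwz])
  have hlt : ‖z / w‖ < 1 := by rwa [norm_div, div_lt_one (norm_pos_iff.2 hw)]
  convert! (hasSum_choose_mul_geometric_of_norm_lt_one k hlt).mul_left (z ^ k / w ^ (k + 1))
    using 1
  · funext m
    rw [div_pow, add_assoc, pow_add z, pow_add w]
    field_simp
  · rw [one_sub_div hw, div_pow]
    field_simp

theorem hasSum_sum_antidiagonal {A α : Type*} [AddMonoid A] [HasAntidiagonal A]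
    [AddCommMonoid α] [TopologicalSpace α] [ContinuousAdd α] [RegularSpace α] {F : A × A → α}
    {S : α} (hF : HasSum F S) : HasSum (fun n => ∑ p ∈ antidiagonal n, F p) S := by
  have hsigma := (HasAntidiagonal.sigmaAntidiagonalEquivProd.hasSum_iff).2 hF
  convert! hsigma.sigma fun n => hasSum_fintype _ using 1
  funext n
  exact (Finset.sum_coe_sort (antidiagonal n) F).symm

theorem summable_mul_choose_mul_pow_div_pow [CompleteSpace 𝕜] {c : ℕ → 𝕜} {z w : 𝕜}
    (h : ‖z‖ < ‖w‖) (hc : Summable fun k => ‖c k‖ * (‖z‖ ^ k / (‖w‖ - ‖z‖) ^ (k + 1))) :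
    Summable fun p : ℕ × ℕ =>
      c p.1 * (((p.2 + p.1).choose p.1 : 𝕜) * (z ^ (p.2 + p.1) / w ^ (p.2 + p.1 + 1))) := by
  let G : ℕ × ℕ → ℝ := fun p =>
    ‖c p.1‖ * (((p.2 + p.1).choose p.1 : ℝ) * (‖z‖ ^ (p.2 + p.1) / ‖w‖ ^ (p.2 + p.1 + 1)))
  have hnorm : ‖(‖z‖ : ℝ)‖ < ‖(‖w‖ : ℝ)‖ := by simpa only [norm_norm] using h
  have hrow : ∀ k, HasSum (fun m => G (k, m)) (‖c k‖ * (‖z‖ ^ k / (‖w‖ - ‖z‖) ^ (k + 1))) :=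
    fun k => (hasSum_choose_mul_pow_div_pow hnorm k).mul_left ‖c k‖
  have hG : Summable G := (summable_prod_of_nonneg fun p => (by positivity : 0 ≤ G p)).2
    ⟨fun k => (hrow k).summable, hc.congr fun k => (hrow k).tsum_eq.symm⟩
  refine hG.of_norm_bounded fun p => ?_
  simp only [G, norm_mul, norm_div, norm_pow]
  gcongr
  simpa only [norm_one, mul_one] using Nat.norm_cast_le (α := 𝕜) _

theorem hasSum_binomial_transform [CompleteSpace 𝕜] {c : ℕ → 𝕜} {z w S : 𝕜} (h : ‖z‖ < ‖w‖)
    (hc : Summable fun k => ‖c k‖ * (‖z‖ ^ k / (‖w‖ - ‖z‖) ^ (k + 1)))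
    (hS : HasSum (fun k => c k * (z ^ k / (w - z) ^ (k + 1))) S) :
    HasSum (fun n => (∑ k ∈ Finset.range (n + 1), (n.choose k : 𝕜) * c k) * z ^ n / w ^ (n + 1))
      S := by
  have hdouble := (summable_mul_choose_mul_pow_div_pow h hc).hasSum
  rw [(hdouble.prod_fiberwise fun k => (hasSum_choose_mul_pow_div_pow h k).mul_left (c k)).unique
    hS] at hdouble
  refine (hasSum_sum_antidiagonal hdouble).congr_fun fun n => ?_
  rw [Finset.Nat.sum_antidiagonal_eq_sum_range_succ_mk, mul_div_assoc, Finset.sum_mul]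
  refine Finset.sum_congr rfl fun k hk => ?_
  rw [Nat.sub_add_cancel (Finset.mem_range_succ_iff.1 hk)]
  ring

end BinomialTransform

section ExponentialTwist

/-- The `k`-th coefficient of the power series `exp (x z) * ∑ j, d j * z ^ j` in `z`. -/
def expMulCoeff (x : ℂ) (d : ℕ → ℂ) (k : ℕ) : ℂ :=
  ∑ jl ∈ antidiagonal k, d jl.1 * (x ^ jl.2 / jl.2.factorial)

theorem expMulCoeff_mul_pow (x : ℂ) (d : ℕ → ℂ) (z : ℂ) (k : ℕ) :
    expMulCoeff x d k * z ^ k =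
      ∑ jl ∈ antidiagonal k, d jl.1 * z ^ jl.1 * ((x * z) ^ jl.2 / jl.2.factorial) := by
  rw [expMulCoeff, Finset.sum_mul]
  refine Finset.sum_congr rfl fun jl hjl => ?_
  rw [← mem_antidiagonal.1 hjl, pow_add]
  ring

theorem summable_norm_expMulCoeff {d : ℕ → ℂ} {z : ℂ} (x : ℂ)
    (hd : Summable fun j => ‖d j * z ^ j‖) :
    Summable fun k => ‖expMulCoeff x d k * z ^ k‖ := by
  simpa only [expMulCoeff_mul_pow] using summable_norm_sum_mul_antidiagonal_of_summable_norm hd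
    (NormedSpace.norm_expSeries_div_summable (x * z))

theorem hasSum_expMulCoeff {d : ℕ → ℂ} {z S : ℂ} (x : ℂ)
    (hd : Summable fun j => ‖d j * z ^ j‖) (hS : HasSum (fun j => d j * z ^ j) S) :
    HasSum (fun k => expMulCoeff x d k * z ^ k) (S * exp (x * z)) := by
  have hexp : HasSum (fun l : ℕ => (x * z) ^ l / (l.factorial : ℂ)) (exp (x * z)) := by
    rw [exp_eq_exp_ℂ]
    exact NormedSpace.expSeries_div_hasSum_exp (x * z)
  rw [← hS.tsum_eq, ← hexp.tsum_eq, tsum_mul_tsum_eq_tsum_sum_antidiagonal_of_summable_norm hd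
    (NormedSpace.norm_expSeries_div_summable (x * z))]
  simpa only [expMulCoeff_mul_pow] using (summable_norm_expMulCoeff x hd).of_norm.hasSum

end ExponentialTwist

section Laguerre

/-- The coefficient of `z ^ j` in `u - exp (x z)`, where `u = ∑ φⱼ(x) zʲ / j!`. -/
def formalPowerDefect (f : ℝ → ℂ) (x : ℝ) (j : ℕ) : ℂ :=
  (formalPower f j x - (x : ℂ) ^ j) / j.factorial

theorem aCoef_eq_sum_choose (f : ℝ → ℂ) (n : ℕ) (x : ℝ) :
    aCoef f n x = ∑ k ∈ Finset.range (n + 1),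
      (n.choose k : ℂ) * expMulCoeff (-x) (formalPowerDefect f x) k := by
  simp only [aCoef, expMulCoeff, Finset.Nat.sum_antidiagonal_eq_sum_range_succ_mk, Finset.mul_sum]
  rw [Finset.sum_comm' (t' := Finset.range (n + 1)) (s' := fun k => Finset.range (k + 1))
    (by simp only [Finset.mem_range, Finset.mem_Icc]; omega)]
  refine Finset.sum_congr rfl fun k hk => Finset.sum_congr rfl fun j hj => ?_
  have hkn : k ≤ n := Finset.mem_range_succ_iff.1 hk
  obtain ⟨m, rfl⟩ := Nat.exists_eq_add_of_le (Finset.mem_range_succ_iff.1 hj)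
  have hfac : ∀ i : ℕ, (i.factorial : ℂ) ≠ 0 := fun i => by exact_mod_cast i.factorial_ne_zero
  have hsign : (-1 : ℂ) ^ j * (-1) ^ (j + m) = (-1) ^ m := by
    rw [pow_add, ← mul_assoc, ← mul_pow, neg_one_mul, neg_neg, one_pow, one_mul]
  rw [Nat.cast_choose ℂ hkn, formalPowerDefect, Nat.add_sub_cancel_left, neg_pow (x : ℂ) m,
    ← hsign]
  field_simp [hfac]

theorem summable_norm_formalPowerDefect {f : ℝ → ℂ} {x : ℝ} (hf : ContinuousOn f (uIcc 0 x))
    (hne : ∀ t ∈ uIcc 0 x, f t ≠ 0) (r : ℂ) :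
    Summable fun j => ‖formalPowerDefect f x j * r ^ j‖ := by
  refine ((summable_norm_formalPower hf hne r).add
    (NormedSpace.norm_expSeries_div_summable ((x : ℂ) * r))).of_nonneg_of_le
    (fun _ => norm_nonneg _) fun j => ?_
  refine (congrArg norm ?_).trans_le (norm_sub_le _ _)
  rw [formalPowerDefect]
  ring

theorem hasSum_formalPowerDefect {f : ℝ → ℂ} {x : ℝ} {z S : ℂ}
    (hS : HasSum (fun j => formalPower f j x / j.factorial * z ^ j) S) :
    HasSum (fun j => formalPowerDefect f x j * z ^ j) (S - exp (x * z)) := by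
  rw [exp_eq_exp_ℂ]
  convert! hS.sub (NormedSpace.expSeries_div_hasSum_exp ((x : ℂ) * z)) using 1
  funext j
  rw [formalPowerDefect]
  ring

theorem norm_lt_norm_one_add {z : ℂ} (hz : -1 / 2 < z.re) : ‖z‖ < ‖1 + z‖ := by
  rw [← sq_lt_sq₀ (norm_nonneg _) (norm_nonneg _), Complex.sq_norm, Complex.sq_norm,
    normSq_apply, normSq_apply]
  simp only [add_re, one_re, add_im, one_im]
  nlinarith

theorem hasSum_aCoef {f : ℝ → ℂ} {x : ℝ} {z S : ℂ} (hf : ContinuousOn f (uIcc 0 x))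
    (hne : ∀ t ∈ uIcc 0 x, f t ≠ 0) (hz : ‖z‖ < ‖1 + z‖)
    (hS : HasSum (fun j => formalPower f j x / j.factorial * z ^ j) S) :
    HasSum (fun n => aCoef f n x * z ^ n / (1 + z) ^ (n + 1))
      ((S - exp (x * z)) * exp (-x * z)) := by
  simp only [aCoef_eq_sum_choose]
  refine hasSum_binomial_transform hz ?_ ?_
  · set r : ℝ := ‖z‖ / (‖1 + z‖ - ‖z‖)
    have hr : 0 ≤ r := div_nonneg (norm_nonneg _) (sub_nonneg.2 hz.le)
    convert! (summable_norm_expMulCoeff (-x) (summable_norm_formalPowerDefect hf hne r)).mul_right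
      (‖1 + z‖ - ‖z‖)⁻¹ using 2 with k
    rw [norm_mul, norm_pow, norm_real, Real.norm_of_nonneg hr, div_pow, pow_succ]
    field_simp
  · simpa only [add_sub_cancel_right, one_pow, div_one] using
      hasSum_expMulCoeff (-x) (summable_norm_formalPowerDefect hf hne z)
        (hasSum_formalPowerDefect hS)

end Laguerre

theorem solution_laguerre_representation_general {q f f' y y' : ℝ → ℂ} {x : ℝ} {ω : ℂ}
    (hω : ω.im < 1 / 2)
    (hf : ∀ t ∈ uIcc 0 x, HasDerivWithinAt f (f' t) (uIcc 0 x) t)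
    (hf' : ∀ t ∈ uIcc 0 x, HasDerivWithinAt f' (q t * f t) (uIcc 0 x) t)
    (hf0 : f 0 = 1) (hf'0 : f' 0 = 0) (hne : ∀ t ∈ uIcc 0 x, f t ≠ 0)
    (hy : ∀ t ∈ uIcc 0 x, HasDerivWithinAt y (y' t) (uIcc 0 x) t)
    (hy' : ∀ t ∈ uIcc 0 x, HasDerivWithinAt y' (q t * y t - ω ^ 2 * y t) (uIcc 0 x) t)
    (hy0 : y 0 = 1) (hy'0 : y' 0 = I * ω) :
    ∃ S : ℂ, HasSum (fun n => aCoef f n x * (I * ω) ^ n / (1 + I * ω) ^ (n + 1)) S ∧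
      y x = exp (I * ω * x) * (1 + S) := by
  have hsq : (I * ω) ^ 2 = -ω ^ 2 := by rw [mul_pow, I_sq, neg_one_mul]
  have hz : ‖I * ω‖ < ‖1 + I * ω‖ := norm_lt_norm_one_add (by rw [I_mul_re]; linarith)
  have hφ : HasSum (fun k => formalPower f k x / k.factorial * (I * ω) ^ k) (y x) :=
    hasSum_formalPower hf hf' hf0 hf'0 hne hy
      (fun t ht => by simpa only [hsq, neg_mul, ← sub_eq_add_neg] using hy' t ht) hy0 hy'0
  refine ⟨_, hasSum_aCoef (fun t ht => (hf t ht).continuousWithinAt) hne hz hφ, ?_⟩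
  have hexp : exp (-x * (I * ω)) * exp (x * (I * ω)) = 1 := by
    rw [← exp_add, neg_mul, neg_add_cancel, exp_zero]
  rw [mul_comm (I * ω)]
  linear_combination (exp (x * (I * ω)) - y x) * hexp

/-- Fourier–Laguerre representation of the solution for real ω. -/
theorem solution_laguerre_representation
    (b : ℝ) (hb : 0 < b) (q : ℝ → ℂ) (hq : ContinuousOn q (Set.Icc (-b) b))
    (f f' : ℝ → ℂ)
    (hf : ∀ x ∈ Set.Icc (-b) b, HasDerivAt f (f' x) x)
    (hf' : ∀ x ∈ Set.Icc (-b) b, HasDerivAt f' (q x * f x) x)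
    (hf0 : f 0 = 1) (hf'0 : f' 0 = 0)
    (hfne : ∀ x ∈ Set.Icc (-b) b, f x ≠ 0)
    (ω : ℝ) (y y' : ℝ → ℂ)
    (hy : ∀ x ∈ Set.Icc (-b) b, HasDerivAt y (y' x) x)
    (hy' : ∀ x ∈ Set.Icc (-b) b, HasDerivAt y' (q x * y x - (ω : ℂ) ^ 2 * y x) x)
    (hy0 : y 0 = 1) (hy'0 : y' 0 = Complex.I * ω) :
    ∀ x ∈ Set.Icc (-b) b, ∃ S : ℂ,
      Tendsto (fun N : ℕ => ∑ n ∈ Finset.range N,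
          aCoef f n x * (Complex.I * ω) ^ n / (1 + Complex.I * ω) ^ (n + 1)) atTop (𝓝 S) ∧
      y x = Complex.exp (Complex.I * ω * x) * (1 + S) := by
  intro x hx
  have hsub : uIcc 0 x ⊆ Set.Icc (-b) b := uIcc_subset_Icc ⟨by linarith, hb.le⟩ hx
  obtain ⟨S, hS, hyx⟩ := solution_laguerre_representation_general (ω := ω) (by simp)
    (fun t ht => (hf t (hsub ht)).hasDerivWithinAt)
    (fun t ht => (hf' t (hsub ht)).hasDerivWithinAt) hf0 hf'0 (fun t ht => hfne t (hsub ht))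
    (fun t ht => (hy t (hsub ht)).hasDerivWithinAt)
    (fun t ht => (hy' t (hsub ht)).hasDerivWithinAt) hy0 hy'0
  exact ⟨S, hS.tendsto_sum_nat, hyx⟩

end
end
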